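/- arXiv:1206.2233 — 2 statements merged into one kernel-verified Lean document; each statement's English description precedes it below -/
import Mathlib

section
/- Let P be a finitely generated FI-module over ℂ that is a projective object of the category of FI-modules. Then P is injective in the category of finitely generated FI-modules: for every morphism i : X → Y of finitely generated FI-modules such that i_S : X(S) → Y(S) is injective for every finite set S, and every morphism f : X → P, there exists a morphism g : Y → P with g ∘ i = f. -/
open CategoryTheory

structure FIObj where
  α : Type
  fin : Fintype α

instance (S : FIObj) : Fintype S.α := S.fin

def FIObj.of (α : Type) [Fintype α] : FIObj := ⟨α, inferInstance⟩

instance : Category FIObj where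
  Hom S T := {f : S.α → T.α // Function.Injective f}
  id S := ⟨id, Function.injective_id⟩
  comp f g := ⟨g.1 ∘ f.1, g.2.comp f.2⟩

/-- FI-modules over ℂ: functors from FI to ℂ-vector spaces. -/
abbrev FIMod := FIObj ⥤ ModuleCat.{0} ℂ

/-- A sub-FI-module. -/
structure FISub (M : FIMod) where
  carrier : ∀ S : FIObj, Submodule ℂ (M.obj S)
  map_mem : ∀ {S T : FIObj} (f : S ⟶ T) (x : M.obj S), x ∈ carrier S → M.map f x ∈ carrier T

/-- A finitely generated FI-module. -/
def FIMod.FG (M : FIMod) : Prop :=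
  ∃ (k : ℕ) (S : Fin k → FIObj) (m : ∀ i, M.obj (S i)),
    ∀ N : FISub M, (∀ i, m i ∈ N.carrier (S i)) → ∀ T, N.carrier T = ⊤

/-!
Write `M(D)` for the free FI-module on one generator of degree `D`, so that `M(D)(T)` has the
injections `D → T` as a basis. A finitely generated projective FI-module is a retract of a finite
direct sum of such modules, so it suffices that each `M(D)` is injective.

Constant FI-modules are injective. Let `ℓ : X ⟶ V` be a morphism to a constant FI-module and let
`X ⊆ Y`. Averaging a linear extension of `ℓ` over the symmetric group gives an invariant linear map
on `Y(N)`, and restricting it along injections `S → N` extends `ℓ` compatibly to all `Y(S)` with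
`|S| ≤ |N|`. A generalized limit over `N` then extends `ℓ` to all of `Y`.

The case of `M(D)` reduces to the constant one by Möbius inversion. Let `κ` read off the coefficient
of the canonical injection `D → D ⊔ S`. A morphism `f : X ⟶ M(D)` gives a morphism `κ ∘ f` from the
shift `S ↦ X(D ⊔ S)` to a constant module, which extends to a morphism `μ` on the shift of `Y`. The
coefficient of `e : D → T` in `f x` is recovered from `κ ∘ f` by inclusion-exclusion over the
subsets of `D`, and the same formula applied to `μ` defines a morphism `Y ⟶ M(D)` extending `f`.
-/

universe u v w w'

section LinearAlgebra

theorem exists_linearMap_eq_of_eventually_eq (K : Type*) [DivisionRing K] (V : Type*)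
    [AddCommGroup V] [Module K V] {ι : Type*} (l : Filter ι) [l.NeBot] :
    ∃ L : (ι → V) →ₗ[K] V, ∀ (s : ι → V) (v : V), (∀ᶠ n in l, s n = v) → L s = v := by
  let toGerm : (ι → V) →ₗ[K] l.Germ V :=
    { toFun := fun s => s, map_add' := fun _ _ => rfl, map_smul' := fun _ _ => rfl }
  let const : V →ₗ[K] l.Germ V := toGerm ∘ₗ LinearMap.pi fun _ => LinearMap.id
  have const_injective : Function.Injective const := fun _ _ h => Filter.Germ.const_inj.mp h
  obtain ⟨r, hr⟩ := const.exists_leftInverse_of_injective (LinearMap.ker_eq_bot.mpr const_injective)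
  refine ⟨r ∘ₗ toGerm, fun s v hs => ?_⟩
  have germ_eq : toGerm s = const v := Filter.Germ.coe_eq.mpr hs
  rw [LinearMap.comp_apply, germ_eq]
  exact LinearMap.congr_fun hr v

theorem sum_neg_one_pow_card_mul_eq_zero {α R : Type*} [Fintype α] [DecidableEq α] [Ring R]
    (a : α) (F : Finset α → R) (hF : ∀ A, a ∉ A → F (insert a A) = F A) :
    ∑ A : Finset α, (-1) ^ A.card * F A = 0 := by
  rw [← Finset.powerset_univ, ← Finset.insert_erase (Finset.mem_univ a),
    Finset.sum_powerset_insert (Finset.notMem_erase a _), ← Finset.sum_add_distrib]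
  refine Finset.sum_eq_zero fun A hA => ?_
  have ha : a ∉ A := fun h => Finset.notMem_erase a _ (Finset.mem_powerset.mp hA h)
  rw [Finset.card_insert_of_notMem ha, hF A ha, pow_succ, mul_neg_one, neg_mul, add_neg_cancel]

end LinearAlgebra

section Averaging

variable {C : Type*} [Category* C] {K : Type u} [Field K] [CharZero K]

theorem exists_end_invariant_extension {X Y : C ⥤ ModuleCat.{v} K} (i : X ⟶ Y) {N : C}
    [Finite (N ⟶ N)] [∀ σ : N ⟶ N, Epi σ] (hi : Function.Injective (i.app N))
    {V : ModuleCat.{v} K} (ℓ : X ⟶ (Functor.const C).obj V) :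
    ∃ ν : Y.obj N →ₗ[K] V,
      (∀ (σ : N ⟶ N) (y : Y.obj N), ν (Y.map σ y) = ν y) ∧
      ∀ x : X.obj N, ν (i.app N x) = ℓ.app N x := by
  have := Fintype.ofFinite (N ⟶ N)
  obtain ⟨r, hr⟩ := (i.app N).hom.exists_leftInverse_of_injective (LinearMap.ker_eq_bot.mpr hi)
  let extend : Y.obj N →ₗ[K] V := (ℓ.app N).hom ∘ₗ r
  have extend_app (x : X.obj N) : extend (i.app N x) = ℓ.app N x :=
    congrArg (ℓ.app N) (LinearMap.congr_fun hr x)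
  have extend_map_app (σ : N ⟶ N) (x : X.obj N) : extend (Y.map σ (i.app N x)) = ℓ.app N x := by
    rw [← NatTrans.naturality_apply, extend_app, NatTrans.naturality_apply]
    rfl
  have card_ne_zero : (Fintype.card (N ⟶ N) : K) ≠ 0 := by
    have : Nonempty (N ⟶ N) := ⟨𝟙 N⟩
    exact Nat.cast_ne_zero.mpr Fintype.card_ne_zero
  refine ⟨(Fintype.card (N ⟶ N) : K)⁻¹ • ∑ τ : N ⟶ N, extend ∘ₗ (Y.map τ).hom, fun σ y => ?_,
    fun x => ?_⟩
  · have comp_bijective : Function.Bijective fun τ : N ⟶ N => σ ≫ τ :=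
      Finite.injective_iff_bijective.mp fun _ _ h => (cancel_epi σ).mp h
    simp only [LinearMap.smul_apply, LinearMap.sum_apply, LinearMap.comp_apply]
    congr 1
    exact Fintype.sum_bijective _ comp_bijective _ _ fun τ => by simp
  · simp only [LinearMap.smul_apply, LinearMap.sum_apply, LinearMap.comp_apply, extend_map_app,
      Finset.sum_const, Finset.card_univ, ← Nat.cast_smul_eq_nsmul K, smul_smul,
      inv_mul_cancel₀ card_ne_zero, one_smul]

end Averaging

namespace FIObj

instance finite_hom (S T : FIObj) : Finite (S ⟶ T) :=
  inferInstanceAs (Finite {f : S.α → T.α // Function.Injective f})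

theorem hom_ext {S T : FIObj} {f g : S ⟶ T} (h : ∀ s, f.1 s = g.1 s) : f = g :=
  Subtype.ext (funext h)

theorem comp_apply {S T U : FIObj} (f : S ⟶ T) (g : T ⟶ U) (s : S.α) :
    (f ≫ g).1 s = g.1 (f.1 s) :=
  rfl

instance mono_hom {S T : FIObj} (φ : S ⟶ T) : Mono φ where
  right_cancellation _ _ h := hom_ext fun s => φ.2 (congrFun (congrArg Subtype.val h) s)

instance epi_end {N : FIObj} (σ : N ⟶ N) : Epi σ where
  left_cancellation f g h := hom_ext fun t => by
    obtain ⟨s, rfl⟩ := Finite.surjective_of_injective σ.2 t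
    exact congrFun (congrArg Subtype.val h) s

theorem exists_comp_end_eq {S N : FIObj} (f g : S ⟶ N) : ∃ σ : N ⟶ N, f ≫ σ = g := by
  classical
  let e : {t // t ∈ Set.range f.1} ≃ {t // t ∈ Set.range g.1} :=
    (Equiv.ofInjective f.1 f.2).symm.trans (Equiv.ofInjective g.1 g.2)
  refine ⟨⟨e.extendSubtype, e.extendSubtype.injective⟩, hom_ext fun s => ?_⟩
  change e.extendSubtype (f.1 s) = g.1 s
  rw [e.extendSubtype_apply_of_mem _ ⟨s, rfl⟩]
  simp only [e, Equiv.trans_apply, Equiv.ofInjective_symm_apply f.2 s, Equiv.ofInjective_apply]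

theorem exists_comp_eq_of_forall_mem_range {D S T : FIObj} (φ : S ⟶ T) (e : D ⟶ T)
    (h : ∀ d, e.1 d ∈ Set.range φ.1) : ∃ e' : D ⟶ S, e' ≫ φ = e := by
  choose e' he' using h
  have e'_injective : Function.Injective e' := fun a b hab => e.2 (by rw [← he', ← he', hab])
  exact ⟨⟨e', e'_injective⟩, hom_ext he'⟩

theorem eventually_nonempty_hom_fin (S : FIObj) :
    ∀ᶠ n : ℕ in Filter.atTop, Nonempty (S ⟶ FIObj.of (Fin n)) := by
  filter_upwards [Filter.eventually_ge_atTop (Fintype.card S.α)] with n hn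
  obtain ⟨f⟩ := Function.Embedding.nonempty_of_card_le (hn.trans_eq (Fintype.card_fin n).symm)
  exact ⟨⟨f, f.injective⟩⟩

/-- The endofunctor `S ↦ D ⊔ S` of FI. Precomposition with it is the shift of FI-modules by `D`. -/
def sumLeft (D : FIObj) : FIObj ⥤ FIObj where
  obj S := FIObj.of (D.α ⊕ S.α)
  map φ := ⟨Sum.map id φ.1, Function.injective_id.sumMap φ.2⟩
  map_id _ := hom_ext fun s => by rcases s with s | s <;> rfl
  map_comp _ _ := hom_ext fun s => by rcases s with s | s <;> rfl

/-- The canonical injection `D → D ⊔ S`. -/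
def inl (D S : FIObj) : D ⟶ (sumLeft D).obj S :=
  ⟨Sum.inl, Sum.inl_injective⟩

section Detach

variable {D S T : FIObj} (e : D ⟶ T) (A : Finset D.α)

open Classical in
/-- Given `e : D → T` and `A ⊆ D`, the function `T → D ⊔ T` moving each point `e d` with `d ∉ A` to
`d` in the new copy of `D`, and leaving every other point in `T`. -/
noncomputable def detachFun : T.α → D.α ⊕ T.α :=
  Function.extend e.1 (fun d => if d ∈ A then Sum.inr (e.1 d) else Sum.inl d) Sum.inr

theorem detachFun_apply_of_mem {d : D.α} (hd : d ∈ A) : detachFun e A (e.1 d) = Sum.inr (e.1 d) :=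
  (e.2.extend_apply _ _ d).trans (if_pos hd)

theorem detachFun_apply_of_notMem {d : D.α} (hd : d ∉ A) : detachFun e A (e.1 d) = Sum.inl d :=
  (e.2.extend_apply _ _ d).trans (if_neg hd)

theorem detachFun_apply_of_notMem_range {t : T.α} (ht : t ∉ Set.range e.1) :
    detachFun e A t = Sum.inr t :=
  Function.extend_apply' _ _ _ ht

theorem leftInverse_detachFun : Function.LeftInverse (Sum.elim e.1 id) (detachFun e A) := by
  intro t
  by_cases ht : t ∈ Set.range e.1
  · obtain ⟨d, rfl⟩ := ht
    by_cases hd : d ∈ A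
    · rw [detachFun_apply_of_mem e A hd, Sum.elim_inr, id]
    · rw [detachFun_apply_of_notMem e A hd, Sum.elim_inl]
  · rw [detachFun_apply_of_notMem_range e A ht, Sum.elim_inr, id]

/-- `detachFun` as a morphism of FI. -/
noncomputable def detach : T ⟶ (sumLeft D).obj T :=
  ⟨detachFun e A, (leftInverse_detachFun e A).injective⟩

theorem comp_detach_comp (e : D ⟶ S) (φ : S ⟶ T) :
    φ ≫ detach (e ≫ φ) A = detach e A ≫ (sumLeft D).map φ := by
  refine hom_ext fun s => ?_
  change detachFun (e ≫ φ) A (φ.1 s) = Sum.map id φ.1 (detachFun e A s)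
  by_cases hs : s ∈ Set.range e.1
  · obtain ⟨d, rfl⟩ := hs
    rw [← comp_apply e φ]
    by_cases hd : d ∈ A
    · rw [detachFun_apply_of_mem _ _ hd, detachFun_apply_of_mem _ _ hd, Sum.map_inr, comp_apply]
    · rw [detachFun_apply_of_notMem _ _ hd, detachFun_apply_of_notMem _ _ hd, Sum.map_inl, id]
  · have hφs : φ.1 s ∉ Set.range (e ≫ φ).1 := fun ⟨d, hd⟩ => hs ⟨d, φ.2 hd⟩
    rw [detachFun_apply_of_notMem_range _ _ hs, detachFun_apply_of_notMem_range _ _ hφs,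
      Sum.map_inr]

theorem comp_detach_insert [DecidableEq D.α] (φ : S ⟶ T) {a : D.α}
    (ha : e.1 a ∉ Set.range φ.1) : φ ≫ detach e (insert a A) = φ ≫ detach e A := by
  refine hom_ext fun s => ?_
  change detachFun e (insert a A) (φ.1 s) = detachFun e A (φ.1 s)
  by_cases hs : φ.1 s ∈ Set.range e.1
  · obtain ⟨d, hd⟩ := hs
    have hda : d ≠ a := fun h => ha ⟨s, by rw [← hd, h]⟩
    rw [← hd]
    by_cases hdA : d ∈ A
    · rw [detachFun_apply_of_mem _ _ hdA,
        detachFun_apply_of_mem _ _ (Finset.mem_insert_of_mem hdA)]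
    · have hdaA : d ∉ insert a A := by simp [hda, hdA]
      rw [detachFun_apply_of_notMem _ _ hdA, detachFun_apply_of_notMem _ _ hdaA]
  · rw [detachFun_apply_of_notMem_range _ _ hs, detachFun_apply_of_notMem_range _ _ hs]

theorem comp_detach_empty : e ≫ detach e ∅ = inl D T :=
  hom_ext fun _ => detachFun_apply_of_notMem e ∅ (Finset.notMem_empty _)

theorem inl_notMem_range_detach {a : D.α} (ha : a ∈ A) :
    (inl D T).1 a ∉ Set.range (detach e A).1 := by
  rintro ⟨t, ht⟩
  change detachFun e A t = Sum.inl a at ht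
  have hta : e.1 a = t := by
    simpa only [ht, Sum.elim_inl] using leftInverse_detachFun e A t
  rw [← hta, detachFun_apply_of_mem e A ha] at ht
  exact Sum.inr_ne_inl ht

end Detach

end FIObj

section ConstantModules

variable {K : Type u} [Field K] [CharZero K] {X Y : FIObj ⥤ ModuleCat.{v} K} {V : ModuleCat.{v} K}

theorem exists_extension_to_const_below (i : X ⟶ Y) {N : FIObj}
    (hi : Function.Injective (i.app N)) (ℓ : X ⟶ (Functor.const FIObj).obj V) :
    ∃ ρ : ∀ S, Y.obj S →ₗ[K] V,
      (∀ {S T : FIObj} (φ : S ⟶ T) (y : Y.obj S), Nonempty (T ⟶ N) → ρ T (Y.map φ y) = ρ S y) ∧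
      ∀ (S : FIObj) (x : X.obj S), Nonempty (S ⟶ N) → ρ S (i.app S x) = ℓ.app S x := by
  obtain ⟨ν, ν_map, ν_app⟩ := exists_end_invariant_extension i hi ℓ
  have restrict (S : FIObj) :
      ∃ ρ : Y.obj S →ₗ[K] V, ∀ (f : S ⟶ N) (y : Y.obj S), ρ y = ν (Y.map f y) := by
    by_cases h : Nonempty (S ⟶ N)
    · obtain ⟨g⟩ := h
      refine ⟨ν ∘ₗ (Y.map g).hom, fun f y => ?_⟩
      obtain ⟨σ, rfl⟩ := FIObj.exists_comp_end_eq g f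
      rw [Functor.map_comp, ModuleCat.comp_apply, ν_map]
      rfl
    · exact ⟨0, fun f => (h ⟨f⟩).elim⟩
  choose ρ hρ using restrict
  refine ⟨ρ, fun φ y ⟨f⟩ => ?_, fun S x ⟨f⟩ => ?_⟩
  · rw [hρ _ f, hρ _ (φ ≫ f), Functor.map_comp, ModuleCat.comp_apply]
  · rw [hρ _ f, ← NatTrans.naturality_apply, ν_app, NatTrans.naturality_apply]
    rfl

instance injective_const (V : ModuleCat.{v} K) : Injective ((Functor.const FIObj).obj V) where
  factors {X Y} ℓ i _ := by
    have hi (S : FIObj) : Function.Injective (i.app S) :=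
      (ModuleCat.mono_iff_injective _).mp inferInstance
    choose ρ ρ_map ρ_app using
      fun n : ℕ => exists_extension_to_const_below i (hi (FIObj.of (Fin n))) ℓ
    obtain ⟨L, hL⟩ := exists_linearMap_eq_of_eventually_eq K V (Filter.atTop : Filter ℕ)
    refine ⟨{ app S := ModuleCat.ofHom (L ∘ₗ LinearMap.pi fun n => ρ n S)
              naturality S T φ := ?_ }, ?_⟩
    · ext y
      change L (fun n => ρ n T (Y.map φ y)) = L (fun n => ρ n S y)
      rw [← sub_eq_zero, ← map_sub]
      refine hL _ _ ((FIObj.eventually_nonempty_hom_fin T).mono fun n hn => ?_)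
      exact sub_eq_zero.mpr (ρ_map n φ y hn)
    · ext S x
      exact hL _ _ ((FIObj.eventually_nonempty_hom_fin S).mono fun n hn => ρ_app n S x hn)

end ConstantModules

section FreeFunctor

variable {C : Type w} [Category.{v} C] {R : Type u} [Ring R]

variable (R) in
/-- The free `C`-module on one generator of degree `D`; for `C = FI` this is usually written
`M(D)`. -/
noncomputable def freeFunctor (D : C) : C ⥤ ModuleCat.{max u v} R where
  obj T := ModuleCat.of R ((D ⟶ T) →₀ R)
  map φ := ModuleCat.ofHom (Finsupp.lmapDomain R R (· ≫ φ))
  map_id T := by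
    ext : 1
    simp only [Category.comp_id]
    exact Finsupp.lmapDomain_id R R
  map_comp φ ψ := by
    ext : 1
    simp only [← Category.assoc]
    exact Finsupp.lmapDomain_comp R R (· ≫ φ) (· ≫ ψ)

namespace freeFunctor

variable {D S T : C}

variable (R) in
/-- The element of `freeFunctor R D` corresponding to `e`, the image of the generator under `e`. -/
noncomputable def basisVector (e : D ⟶ T) : (freeFunctor R D).obj T :=
  Finsupp.single e (1 : R)

/-- The coordinate function on `freeFunctor R D` dual to the basis vector `e`. -/
noncomputable def coeff (e : D ⟶ T) : (freeFunctor R D).obj T →ₗ[R] R :=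
  Finsupp.lapply e

theorem ext {v v' : (freeFunctor R D).obj T} (h : ∀ e : D ⟶ T, coeff e v = coeff e v') : v = v' :=
  Finsupp.ext h

theorem coeff_comp_map (φ : S ⟶ T) [Mono φ] (e : D ⟶ S) (v : (freeFunctor R D).obj S) :
    coeff (e ≫ φ) ((freeFunctor R D).map φ v) = coeff e v :=
  Finsupp.mapDomain_apply (fun _ _ h => (cancel_mono φ).mp h) v e

theorem coeff_map_eq_zero {φ : S ⟶ T} {e : D ⟶ T} (h : ¬∃ e' : D ⟶ S, e' ≫ φ = e)
    (v : (freeFunctor R D).obj S) : coeff e ((freeFunctor R D).map φ v) = 0 :=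
  Finsupp.mapDomain_of_notMem_range _ _ h

/-- The morphism out of `freeFunctor R D` sending the generator to `m`. -/
noncomputable def desc {M : C ⥤ ModuleCat.{max u v} R} (m : M.obj D) : freeFunctor R D ⟶ M where
  app T := ModuleCat.ofHom (Finsupp.linearCombination R fun e : D ⟶ T => M.map e m)
  naturality S T φ := by
    ext : 1
    refine Finsupp.lhom_ext' fun e => LinearMap.ext_ring ?_
    change Finsupp.linearCombination R _ (Finsupp.mapDomain _ (Finsupp.single e 1)) =
      M.map φ (Finsupp.linearCombination R _ (Finsupp.single e 1))
    simp

theorem desc_app_basisVector {M : C ⥤ ModuleCat.{max u v} R} (m : M.obj D) (e : D ⟶ T) :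
    (desc m).app T (basisVector R e) = M.map e m :=
  (Finsupp.linearCombination_single R 1 e).trans (one_smul R _)

end freeFunctor

end FreeFunctor

section Moebius

open FIObj freeFunctor

variable {R : Type u} [CommRing R] {D : FIObj} {X Y : FIObj ⥤ ModuleCat.{u} R}

theorem coeff_map_eq_zero_of_notMem_range {S T : FIObj} {φ : S ⟶ T} {e : D ⟶ T} {a : D.α}
    (ha : e.1 a ∉ Set.range φ.1) (v : (freeFunctor R D).obj S) :
    coeff e ((freeFunctor R D).map φ v) = 0 := by
  refine coeff_map_eq_zero ?_ v
  rintro ⟨e', rfl⟩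
  exact ha ⟨e'.1 a, rfl⟩

variable (R D) in
/-- The functional on the shift of `M(D)` by `D` that reads off the coefficient of the canonical
injection. -/
noncomputable def inlCoeff :
    sumLeft D ⋙ freeFunctor R D ⟶ (Functor.const FIObj).obj (ModuleCat.of R R) where
  app S := ModuleCat.ofHom (coeff (inl D S))
  naturality S T φ := by
    ext v
    exact coeff_comp_map ((sumLeft D).map φ) (inl D S) v

variable (μ : sumLeft D ⋙ Y ⟶ (Functor.const FIObj).obj (ModuleCat.of R R))

/-- The value of the functional `μ` at `T`, with codomain `R` rather than the value at `T` of the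
constant functor. -/
def evalFunctional (T : FIObj) : Y.obj ((sumLeft D).obj T) →ₗ[R] R :=
  (μ.app T).hom

theorem evalFunctional_map {S T : FIObj} (φ : S ⟶ T) (y : Y.obj ((sumLeft D).obj S)) :
    evalFunctional μ T (Y.map ((sumLeft D).map φ) y) = evalFunctional μ S y :=
  NatTrans.naturality_apply μ φ y

/-- The inclusion-exclusion sum that recovers the coefficient of `e` from a functional on the
shift. -/
noncomputable def moebiusCoeff {T : FIObj} (e : D ⟶ T) : Y.obj T →ₗ[R] R :=
  ∑ A : Finset D.α, (-1 : R) ^ A.card • (evalFunctional μ T ∘ₗ (Y.map (detach e A)).hom)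

theorem moebiusCoeff_apply {T : FIObj} (e : D ⟶ T) (y : Y.obj T) :
    moebiusCoeff μ e y =
      ∑ A : Finset D.α, (-1 : R) ^ A.card * evalFunctional μ T (Y.map (detach e A) y) := by
  simp only [moebiusCoeff, LinearMap.sum_apply, LinearMap.smul_apply, smul_eq_mul,
    LinearMap.comp_apply]

theorem moebiusCoeff_comp_map {S T : FIObj} (φ : S ⟶ T) (e : D ⟶ S) (y : Y.obj S) :
    moebiusCoeff μ (e ≫ φ) (Y.map φ y) = moebiusCoeff μ e y := by
  rw [moebiusCoeff_apply, moebiusCoeff_apply]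
  refine Finset.sum_congr rfl fun A _ => ?_
  rw [← ModuleCat.comp_apply, ← Functor.map_comp, comp_detach_comp, Functor.map_comp,
    ModuleCat.comp_apply, evalFunctional_map]

theorem moebiusCoeff_map_eq_zero {S T : FIObj} {φ : S ⟶ T} {e : D ⟶ T} {a : D.α}
    (ha : e.1 a ∉ Set.range φ.1) (y : Y.obj S) : moebiusCoeff μ e (Y.map φ y) = 0 := by
  classical
  rw [moebiusCoeff_apply]
  refine sum_neg_one_pow_card_mul_eq_zero a _ fun A _ => ?_
  rw [← ModuleCat.comp_apply, ← ModuleCat.comp_apply, ← Functor.map_comp, ← Functor.map_comp,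
    comp_detach_insert e A φ ha]

/-- The morphism to `M(D)` obtained from a functional on the shift by Möbius inversion. -/
noncomputable def moebius : Y ⟶ freeFunctor R D where
  app T := ModuleCat.ofHom
    ((Finsupp.linearEquivFunOnFinite R R (D ⟶ T)).symm.toLinearMap ∘ₗ
      LinearMap.pi fun e => moebiusCoeff μ e)
  naturality S T φ := by
    ext y
    refine freeFunctor.ext fun e => ?_
    change moebiusCoeff μ e (Y.map φ y) = coeff e ((freeFunctor R D).map φ _)
    by_cases he : ∀ d, e.1 d ∈ Set.range φ.1
    · obtain ⟨e', rfl⟩ := exists_comp_eq_of_forall_mem_range φ e he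
      rw [moebiusCoeff_comp_map, coeff_comp_map]
      rfl
    · obtain ⟨a, ha⟩ := not_forall.mp he
      rw [moebiusCoeff_map_eq_zero μ ha, coeff_map_eq_zero_of_notMem_range ha]

theorem coeff_moebius_app {T : FIObj} (e : D ⟶ T) (y : Y.obj T) :
    coeff e ((moebius μ).app T y) = moebiusCoeff μ e y :=
  rfl

theorem moebius_whiskerLeft_comp (f : X ⟶ Y) :
    moebius (Functor.whiskerLeft (sumLeft D) f ≫ μ) = f ≫ moebius μ := by
  ext T x
  refine freeFunctor.ext fun e => ?_
  rw [NatTrans.comp_app, ModuleCat.comp_apply, coeff_moebius_app, coeff_moebius_app,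
    moebiusCoeff_apply, moebiusCoeff_apply]
  refine Finset.sum_congr rfl fun A _ => ?_
  rw [← NatTrans.naturality_apply]
  rfl

theorem moebius_inlCoeff : moebius (inlCoeff R D) = 𝟙 (freeFunctor R D) := by
  ext T v
  refine freeFunctor.ext fun e => ?_
  rw [coeff_moebius_app, moebiusCoeff_apply, Finset.sum_eq_single ∅]
  · change _ * coeff (inl D T) ((freeFunctor R D).map (detach e ∅) v) = coeff e v
    rw [← comp_detach_empty e, coeff_comp_map, Finset.card_empty, pow_zero, one_mul]
  · intro A _ hA
    obtain ⟨a, ha⟩ := Finset.nonempty_iff_ne_empty.mpr hA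
    change _ * coeff (inl D T) ((freeFunctor R D).map (detach e A) v) = 0
    rw [coeff_map_eq_zero_of_notMem_range (inl_notMem_range_detach e A ha), mul_zero]
  · exact fun h => (h (Finset.mem_univ ∅)).elim

instance injective_freeFunctor {K : Type u} [Field K] [CharZero K] (D : FIObj) :
    Injective (freeFunctor K D) where
  factors {X Y} f i _ := by
    have (S : FIObj) : Mono ((Functor.whiskerLeft (sumLeft D) i).app S) :=
      inferInstanceAs (Mono (i.app ((sumLeft D).obj S)))
    have : Mono (Functor.whiskerLeft (sumLeft D) i) := NatTrans.mono_of_mono_app _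
    let ℓ := Functor.whiskerLeft (sumLeft D) f ≫ inlCoeff K D
    let μ := Injective.factorThru ℓ (Functor.whiskerLeft (sumLeft D) i)
    refine ⟨moebius μ, ?_⟩
    calc i ≫ moebius μ
        = moebius (Functor.whiskerLeft (sumLeft D) i ≫ μ) := (moebius_whiskerLeft_comp μ i).symm
      _ = moebius ℓ := by rw [Injective.comp_factorThru]
      _ = f ≫ moebius (inlCoeff K D) := moebius_whiskerLeft_comp _ f
      _ = f := by rw [moebius_inlCoeff, Category.comp_id]

end Moebius

section FiniteGeneration

open Limits

attribute [local instance] Abelian.hasFiniteBiproducts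

variable {C : Type w} [Category.{v} C] {R : Type u} [Ring R]

/-- Finite generation of a `C`-module, phrased by spanning sets: the images of finitely many
elements under all morphisms of `C` span every value. -/
def IsFinitelyGenerated (M : C ⥤ ModuleCat.{w'} R) : Prop :=
  ∃ (k : ℕ) (D : Fin k → C) (m : ∀ j, M.obj (D j)),
    ∀ T, Submodule.span R (Set.range fun e : Σ j, D j ⟶ T => M.map e.2 (m e.1)) = ⊤

theorem FIMod.FG.isFinitelyGenerated {M : FIMod} (hM : M.FG) : IsFinitelyGenerated M := by
  obtain ⟨k, D, m, hm⟩ := hM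
  let spanSub : FISub M :=
    { carrier T := Submodule.span ℂ (Set.range fun e : Σ j, D j ⟶ T => M.map e.2 (m e.1))
      map_mem {S T} f x hx := by
        refine Submodule.mem_comap.mp (Submodule.span_le.mpr ?_ hx)
        rintro _ ⟨⟨j, e⟩, rfl⟩
        exact Submodule.subset_span ⟨⟨j, e ≫ f⟩, by simp⟩ }
  exact ⟨k, D, m, hm spanSub fun j => Submodule.subset_span ⟨⟨j, 𝟙 _⟩, by simp⟩⟩

theorem IsFinitelyGenerated.exists_epi_biproduct {M : C ⥤ ModuleCat.{max u v} R}
    (hM : IsFinitelyGenerated M) :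
    ∃ (k : ℕ) (D : Fin k → C) (π : (⨁ fun j => freeFunctor R (D j)) ⟶ M), Epi π := by
  obtain ⟨k, D, m, span_eq_top⟩ := hM
  let π := biproduct.desc fun j => freeFunctor.desc (m j)
  suffices ∀ T, Epi (π.app T) from ⟨k, D, π, NatTrans.epi_of_epi_app π⟩
  intro T
  rw [ModuleCat.epi_iff_range_eq_top, ← top_le_iff, ← span_eq_top T, Submodule.span_le]
  rintro _ ⟨⟨j, e⟩, rfl⟩
  refine ⟨(biproduct.ι (fun j => freeFunctor R (D j)) j).app T (freeFunctor.basisVector R e), ?_⟩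
  change (biproduct.ι _ j ≫ π).app T (freeFunctor.basisVector R e) = M.map e (m j)
  rw [biproduct.ι_desc, freeFunctor.desc_app_basisVector]

theorem projective_fg_FIMod_is_injective_in_fg_general {K : Type u} [Field K] [CharZero K]
    (P : FIObj ⥤ ModuleCat.{u} K) (hfg : IsFinitelyGenerated P) (hproj : Projective P) :
    Injective P := by
  obtain ⟨k, D, π, _⟩ := hfg.exists_epi_biproduct
  let retract : Retract P (⨁ fun j => freeFunctor K (D j)) :=
    { i := Projective.factorThru (𝟙 P) π
      r := π
      retract := Projective.factorThru_comp _ _ }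
  exact retract.injective

end FiniteGeneration

/-- A finitely generated FI-module over ℂ that is a projective object of
the category of FI-modules is injective in the category of finitely generated FI-modules. -/
theorem projective_fg_FIMod_is_injective_in_fg
    (P : FIMod) (hfg : FIMod.FG P) (hproj : Projective P) :
    ∀ (X Y : FIMod), FIMod.FG X → FIMod.FG Y →
      ∀ (i : X ⟶ Y), (∀ S : FIObj, Function.Injective (i.app S)) →
        ∀ f : X ⟶ P, ∃ g : Y ⟶ P, i ≫ g = f := by
  intro X Y _ _ i hi f
  have : Injective P :=
    projective_fg_FIMod_is_injective_in_fg_general P hfg.isFinitelyGenerated hproj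
  have (S : FIObj) : Mono (i.app S) := (ModuleCat.mono_iff_injective _).mpr (hi S)
  have : Mono i := NatTrans.mono_of_mono_app i
  exact Injective.factors f i
end

section
/- Let M be a finitely generated FI-module over ℂ. For a partition λ of n let σ_λ ∈ S_n be a permutation of cycle type λ; since bijections are FI-morphisms, M(σ_λ) is a linear automorphism of the finite-dimensional space M_n, and its trace trace(σ_λ | M) depends only on λ. Define the enhanced Hilbert series H̃_M = Σ_λ trace(σ_λ | M) · t^λ/λ!, a formal power series in the variables t_1, t_2, …, the sum being over all partitions λ. Then there exist an integer n₀ and unique polynomials p, q ∈ ℚ[t_1,…,t_{n₀}] such that H̃_M = p · exp(t_1 + t_2 + t_3 + ⋯) + q. -/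
open CategoryTheory

/-- The trace of the automorphism of `M_n = M({1,…,n})` induced by a permutation σ. -/
noncomputable def traceOfPerm (M : FIMod) (n : ℕ) (σ : Equiv.Perm (Fin n)) : ℂ :=
  LinearMap.trace ℂ (M.obj (FIObj.of (Fin n))) (M.map (⟨σ, σ.injective⟩ :
    FIObj.of (Fin n) ⟶ FIObj.of (Fin n))).hom

/-- The multiplicity function of a partition, as a monomial exponent: the variable of
index `i` (representing `t_{i+1}`) gets exponent `m_{i+1}(λ)`, the number of parts of λ
equal to `i+1`. -/
noncomputable def partMonomial (s : Multiset ℕ) : ℕ →₀ ℕ :=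
  Finsupp.comapDomain Nat.succ (Multiset.toFinsupp s) (Nat.succ_injective.injOn)

/-- `λ! = ∏_i m_i(λ)!`, in terms of the multiplicity function. -/
noncomputable def partFactorial (d : ℕ →₀ ℕ) : ℚ :=
  ∏ i ∈ d.support, (Nat.factorial (d i) : ℚ)

/-- The formal power series `exp(t_1 + t_2 + t_3 + ⋯)`: the coefficient of the monomial
with exponents e is `∏_i 1/(e_i)!`. -/
noncomputable def expTzero : MvPowerSeries ℕ ℚ :=
  fun e => ∏ i ∈ e.support, (1 / (Nat.factorial (e i) : ℚ))

/-- The property that `H̃_M = p·exp(t_1+t_2+⋯) + q`: for every n and every permutation σ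
of `{1,…,n}` with cycle type (partition) λ, the trace of σ on `M_n` equals λ! times the
coefficient of `t^λ` in the series `p·exp(t_1+t_2+⋯) + q` (variable i of `Fin n₀`
represents `t_{i+1}`). -/
def IsEnhancedHilbertPair (M : FIMod) (n₀ : ℕ) (p q : MvPolynomial (Fin n₀) ℚ) : Prop :=
  ∀ (n : ℕ) (σ : Equiv.Perm (Fin n)),
    traceOfPerm M n σ =
      algebraMap ℚ ℂ (partFactorial (partMonomial σ.partition.parts) *
        MvPowerSeries.coeff (partMonomial σ.partition.parts)
          ((MvPolynomial.rename (Fin.val) p : MvPowerSeries ℕ ℚ) * expTzero +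
            (MvPolynomial.rename (Fin.val) q : MvPowerSeries ℕ ℚ)))

/-!
A finitely generated FI-module `M` has finite-dimensional values and is generated in degrees below
some `d`. The derivative `DM(α) = M(α ⊔ {∗}) / M(α)` is generated in degrees below `d - 1`, so by
induction there is an `r` such that in degrees at least `r` the structure maps of `M, DM, D²M, …`
are injective and `D^d M` vanishes.

If `r = 0`, then `M(α) ≅ ⨁_{A ⊆ α} H₀(M)(A)`, where the indecomposables `H₀(M)` vanish in large
degrees. The trace of `σ` is thus the sum of the traces of `σ|_A` on `H₀(M)(A)` over the
`σ`-stable subsets `A`, that is, over the sets of cycles of `σ`, which says that the series of `M`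
is the series of `H₀(M)`, a polynomial, times the exponential. In general `χ_M = χ_{ΣM} - χ_{DM}`
in degrees at least `r`, where the shift `ΣM(α) = M(α ⊔ {∗})` has `r` lowered by one; induct on
the order of the derivative and on `r`, putting the finitely many exceptional coefficients into
`q`.

The traces are rational because `σ^k` is conjugate to `σ` for `k` prime to the order of `σ`. The
pair `(p, q)` is unique because differentiating by a variable that does not occur in it kills `q`
and fixes `p · exp`.
-/

/-! ## Traces -/

section Trace

variable {K V W U : Type*} [Field K] [AddCommGroup V] [Module K V] [AddCommGroup W] [Module K W]
  [AddCommGroup U] [Module K U]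

lemma trace_eq_of_intertwines (e : V ≃ₗ[K] W) {f : V →ₗ[K] V} {g : W →ₗ[K] W}
    (h : ∀ x, e (f x) = g (e x)) : LinearMap.trace K V f = LinearMap.trace K W g := by
  have hconj : e.conj f = g := LinearMap.ext fun x => by simp [LinearEquiv.conj_apply, h]
  rw [← LinearMap.trace_conj' f e, hconj]

lemma exists_comp_add_comp_eq_id {i : U →ₗ[K] V} {p : V →ₗ[K] W} (hi : Function.Injective i)
    (hp : Function.Surjective p) (hex : Function.Exact i p) :
    ∃ (r : V →ₗ[K] U) (s : W →ₗ[K] V),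
      r ∘ₗ i = .id ∧ p ∘ₗ s = .id ∧ i ∘ₗ r + s ∘ₗ p = .id := by
  obtain ⟨s, hs⟩ := p.exists_rightInverse_of_surjective (LinearMap.range_eq_top.2 hp)
  obtain ⟨r, hr⟩ := i.exists_leftInverse_of_injective (LinearMap.ker_eq_bot.2 hi)
  have hps (x) : p (s x) = x := LinearMap.congr_fun hs x
  have hri (x) : r (i x) = x := LinearMap.congr_fun hr x
  refine ⟨r ∘ₗ (.id - s ∘ₗ p), s, LinearMap.ext fun x => ?_, hs, LinearMap.ext fun x => ?_⟩
  · simp [hex.apply_apply_eq_zero, hri]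
  · obtain ⟨y, hy⟩ := (hex (x - s (p x))).1 (by simp [hps])
    simp [← hy, hri, ← eq_sub_iff_add_eq]

lemma trace_eq_add_of_exact [FiniteDimensional K V] [FiniteDimensional K W]
    [FiniteDimensional K U] {i : U →ₗ[K] V} {p : V →ₗ[K] W} (hi : Function.Injective i)
    (hp : Function.Surjective p) (hex : Function.Exact i p) {g : V →ₗ[K] V} {g₁ : U →ₗ[K] U}
    {g₂ : W →ₗ[K] W} (h₁ : ∀ x, g (i x) = i (g₁ x)) (h₂ : ∀ x, p (g x) = g₂ (p x)) :
    LinearMap.trace K V g = LinearMap.trace K U g₁ + LinearMap.trace K W g₂ := by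
  obtain ⟨r, s, hri, hps, hid⟩ := exists_comp_add_comp_eq_id hi hp hex
  have hg₁ : r ∘ₗ (g ∘ₗ i) = g₁ := LinearMap.ext fun x => by
    simpa [h₁] using LinearMap.congr_fun hri (g₁ x)
  have hg₂ : p ∘ₗ (g ∘ₗ s) = g₂ := LinearMap.ext fun x => by
    simpa [h₂] using congrArg g₂ (LinearMap.congr_fun hps x)
  calc LinearMap.trace K V g = LinearMap.trace K V ((g ∘ₗ i) ∘ₗ r + (g ∘ₗ s) ∘ₗ p) := by
        rw [LinearMap.comp_assoc, LinearMap.comp_assoc, ← LinearMap.comp_add, hid,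
          LinearMap.comp_id]
    _ = LinearMap.trace K U g₁ + LinearMap.trace K W g₂ := by
        rw [map_add, LinearMap.trace_comp_comm' r, LinearMap.trace_comp_comm' p, hg₁, hg₂]

lemma trace_pi_eq_sum {ι : Type*} [Fintype ι] [DecidableEq ι] (E : ι → Type*)
    [∀ i, AddCommGroup (E i)] [∀ i, Module K (E i)] [∀ i, FiniteDimensional K (E i)]
    (g : (∀ i, E i) →ₗ[K] ∀ i, E i) :
    LinearMap.trace K _ g =
      ∑ i, LinearMap.trace K (E i) (.proj i ∘ₗ g ∘ₗ .single K E i) := by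
  have hg : g = ∑ i, (g ∘ₗ .single K E i) ∘ₗ .proj i := by
    refine LinearMap.ext fun x => ?_
    simp only [LinearMap.sum_apply, LinearMap.comp_apply, ← map_sum]
    exact congrArg g (funext fun j => by simp)
  conv_lhs => rw [hg, map_sum]
  exact Finset.sum_congr rfl fun i _ => LinearMap.trace_comp_comm' _ _

lemma finrank_le_of_surjective_of_ker_le [FiniteDimensional K U] {f : V →ₗ[K] U} {g : V →ₗ[K] W}
    (hf : Function.Surjective f) (hg : Function.Surjective g)
    (hker : LinearMap.ker f ≤ LinearMap.ker g) : Module.finrank K W ≤ Module.finrank K U := by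
  let e := f.quotKerEquivOfSurjective hf
  have : FiniteDimensional K (V ⧸ LinearMap.ker f) := e.symm.finiteDimensional
  rw [← e.finrank_eq]
  exact LinearMap.finrank_le_finrank_of_surjective (f := (LinearMap.ker f).liftQ g hker)
    fun w => (hg w).imp' (Submodule.mkQ _) fun _ => id

end Trace

/-! ## Rationality of traces -/

section Rationality

lemma cycleType_pow_of_coprime {α : Type*} [Fintype α] [DecidableEq α] {σ : Equiv.Perm α} {k : ℕ}
    (h : k.Coprime (orderOf σ)) : (σ ^ k).cycleType = σ.cycleType := by
  induction σ using Equiv.Perm.cycle_induction_on with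
  | base_one => simp
  | base_cycles σ hσ =>
    rw [(hσ.pow_iff.2 h).cycleType, hσ.cycleType, Equiv.Perm.support_pow_coprime h]
  | induction_disjoint σ τ hd _ ihσ ihτ =>
    rw [hd.orderOf] at h
    rw [hd.commute.mul_pow, (hd.pow_disjoint_pow k k).cycleType_mul, hd.cycleType_mul,
      ihσ (h.coprime_dvd_right (Nat.dvd_lcm_left _ _)),
      ihτ (h.coprime_dvd_right (Nat.dvd_lcm_right _ _))]

lemma mem_range_algebraMap_of_forall_coprime {F L : Type*} [Field F] [Field L] [Algebra F L]
    {N : ℕ} [NeZero N] [IsCyclotomicExtension {N} F L] {ζ : L} (hζ : IsPrimitiveRoot ζ N)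
    {m : ℕ → ℕ} (h : ∀ k, k.Coprime N → ∑ a ∈ Finset.range N, (m a : L) * (ζ ^ a) ^ k =
      ∑ a ∈ Finset.range N, (m a : L) * ζ ^ a) :
    ∑ a ∈ Finset.range N, (m a : L) * ζ ^ a ∈ Set.range (algebraMap F L) := by
  have : IsGalois F L := IsCyclotomicExtension.isGalois {N} F L
  have : FiniteDimensional F L := IsCyclotomicExtension.finiteDimensional {N} F L
  rw [← IntermediateField.mem_bot, IsGalois.mem_bot_iff_fixed]
  intro g
  have hgζ : IsPrimitiveRoot (g ζ) N := hζ.map_of_injective g.injective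
  obtain ⟨k, -, hk⟩ := hζ.eq_pow_of_pow_eq_one hgζ.pow_eq_one
  have hcop : k.Coprime N := (hζ.pow_iff_coprime (NeZero.pos N) k).1 (hk ▸ hgζ)
  calc g (∑ a ∈ Finset.range N, (m a : L) * ζ ^ a)
      = ∑ a ∈ Finset.range N, (m a : L) * (ζ ^ a) ^ k := by
        simp only [map_sum, map_mul, map_natCast, map_pow, ← hk, pow_right_comm]
    _ = _ := h k hcop

open Module

variable {K V : Type*} [Field K] [AddCommGroup V] [Module K V]

lemma pow_apply_of_mem_eigenspace {f : End K V} {μ : K} {x : V} (hx : x ∈ f.eigenspace μ)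
    (j : ℕ) : (f ^ j) x = μ ^ j • x := by
  induction j with
  | zero => simp
  | succ j ih =>
    rw [pow_succ', End.mul_apply, ih, map_smul, End.mem_eigenspace_iff.1 hx, smul_smul, pow_succ]

lemma pow_eq_one_of_eigenspace_ne_bot {f : End K V} {N : ℕ} (hf : f ^ N = 1) {μ : K}
    (hμ : f.eigenspace μ ≠ ⊥) : μ ^ N = 1 := by
  obtain ⟨x, hx, hx0⟩ := Submodule.exists_mem_ne_zero_of_ne_bot hμ
  have := pow_apply_of_mem_eigenspace hx N
  rw [hf, End.one_apply] at this
  exact smul_left_injective K hx0 (by simpa using this.symm)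

lemma trace_pow_restrict_eigenspace [FiniteDimensional K V] (f : End K V) (μ : K) (j : ℕ)
    (h : Set.MapsTo (f ^ j) (f.eigenspace μ) (f.eigenspace μ)) :
    LinearMap.trace K _ (LinearMap.restrict (f ^ j) h) = finrank K (f.eigenspace μ) * μ ^ j := by
  have hscalar : LinearMap.restrict (f ^ j) h = μ ^ j • LinearMap.id :=
    LinearMap.ext fun x => Subtype.ext (pow_apply_of_mem_eigenspace x.2 j)
  rw [hscalar, map_smul, LinearMap.trace_id, smul_eq_mul, mul_comm]

variable [IsAlgClosed K] [CharZero K] [FiniteDimensional K V]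

lemma iSup_eigenspace_eq_top_of_pow_eq_one {f : End K V} {N : ℕ} (hN : N ≠ 0) (hf : f ^ N = 1) :
    ⨆ μ, f.eigenspace μ = ⊤ := by
  have hsep : (Polynomial.X ^ N - Polynomial.C (1 : K)).Separable :=
    Polynomial.separable_X_pow_sub_C 1 (Nat.cast_ne_zero.2 hN) one_ne_zero
  exact (End.isSemisimple_of_squarefree_aeval_eq_zero hsep.squarefree
    (by simp [hf])).iSup_eigenspace_eq_top

lemma trace_pow_eq_sum_finrank_eigenspace {f : End K V} {N : ℕ} [NeZero N] (hf : f ^ N = 1)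
    {ζ : K} (hζ : IsPrimitiveRoot ζ N) (j : ℕ) :
    LinearMap.trace K V (f ^ j) =
      ∑ a ∈ Finset.range N, (finrank K (f.eigenspace (ζ ^ a)) : K) * (ζ ^ a) ^ j := by
  classical
  have hfin := WellFoundedGT.finite_ne_bot_of_iSupIndep f.eigenspaces_iSupIndep
  have hint : DirectSum.IsInternal f.eigenspace :=
    DirectSum.isInternal_submodule_of_iSupIndep_of_iSup_eq_top f.eigenspaces_iSupIndep
      (iSup_eigenspace_eq_top_of_pow_eq_one (NeZero.ne N) hf)
  have hmaps (μ : K) : Set.MapsTo (f ^ j) (f.eigenspace μ) (f.eigenspace μ) :=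
    f.mapsTo_genEigenspace_of_comm (Commute.pow_right (.refl f) j) μ 1
  have hsub : hfin.toFinset ⊆ (Finset.range N).image (ζ ^ ·) := fun μ hμ => by
    have hμN := pow_eq_one_of_eigenspace_ne_bot hf (hfin.mem_toFinset.1 hμ)
    obtain ⟨a, ha, rfl⟩ := hζ.eq_pow_of_pow_eq_one hμN
    exact Finset.mem_image_of_mem _ (Finset.mem_range.2 ha)
  have hinj : Set.InjOn (ζ ^ ·) (Finset.range N : Set ℕ) := by
    simpa [Set.InjOn] using fun a ha b hb => hζ.pow_inj ha hb
  simp_rw [LinearMap.trace_eq_sum_trace_restrict' hint hfin hmaps, trace_pow_restrict_eigenspace]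
  rw [Finset.sum_subset hsub fun μ _ hμ => by simp_all, Finset.sum_image hinj]

lemma trace_mem_range_algebraMap_of_forall_coprime (F : Type*) [Field F] [Algebra F K]
    {N : ℕ} [NeZero N] {f : End K V} (hf : f ^ N = 1)
    (hc : ∀ k, k.Coprime N → LinearMap.trace K V (f ^ k) = LinearMap.trace K V f) :
    LinearMap.trace K V f ∈ Set.range (algebraMap F K) := by
  let L := CyclotomicField N F
  have : CharZero F := (algebraMap F K).charZero
  have : IsCyclotomicExtension {N} F L := inferInstance
  have : FiniteDimensional F L := IsCyclotomicExtension.finiteDimensional {N} F L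
  let φ : L →ₐ[F] K := IsAlgClosed.lift
  have hζ : IsPrimitiveRoot _ N := IsCyclotomicExtension.zeta_spec N F L
  let m (a : ℕ) : ℕ := finrank K (f.eigenspace (φ (IsCyclotomicExtension.zeta N F L) ^ a))
  have htrace (k : ℕ) : φ (∑ a ∈ Finset.range N, (m a : L) *
      (IsCyclotomicExtension.zeta N F L ^ a) ^ k) = LinearMap.trace K V (f ^ k) := by
    rw [trace_pow_eq_sum_finrank_eigenspace hf (hζ.map_of_injective (f := φ) φ.injective)]
    simp [m, map_natCast φ]
  have htrace_one : φ (∑ a ∈ Finset.range N, (m a : L) * IsCyclotomicExtension.zeta N F L ^ a) =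
      LinearMap.trace K V f := by
    simpa using htrace 1
  obtain ⟨c, hc⟩ := mem_range_algebraMap_of_forall_coprime (F := F) hζ (m := m) fun k hk =>
    φ.toRingHom.injective ((htrace k).trans ((hc k hk).trans htrace_one.symm))
  exact ⟨c, by rw [← htrace_one, ← hc, AlgHom.commutes]⟩

end Rationality

/-! ## FI-modules, shifts and derivatives -/

lemma exists_equiv_trans_eq {α β γ : Type*} [Fintype β] [Fintype γ] (f : α ↪ β) (g : α ↪ γ)
    (h : Fintype.card β = Fintype.card γ) : ∃ e : β ≃ γ, f.trans e.toEmbedding = g := by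
  classical
  let e₀ : β ≃ γ := Fintype.equivOfCardEq h
  let g' : α ↪ β := g.trans e₀.symm.toEmbedding
  let e₁ : {b // b ∈ Set.range f} ≃ {b // b ∈ Set.range g'} :=
    (Equiv.ofInjective f f.injective).symm.trans (Equiv.ofInjective g' g'.injective)
  refine ⟨e₁.extendSubtype.trans e₀, DFunLike.ext _ _ fun a => ?_⟩
  have hfa : e₁.extendSubtype (f a) = g' a := by
    rw [Equiv.extendSubtype_apply_of_mem e₁ (f a) ⟨a, rfl⟩]
    simp [e₁]
  simp [hfa, g']

namespace FIMod

open Function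

variable {M N : FIMod} {α β γ : Type} [Fintype α] [Fintype β] [Fintype γ]

/-- The value `M(α)`. -/
abbrev space (M : FIMod) (α : Type) [Fintype α] : Type := M.obj (FIObj.of α)

/-- The linear map `M(f)`. -/
def act (M : FIMod) (f : α ↪ β) : M.space α →ₗ[ℂ] M.space β :=
  (M.map (X := FIObj.of α) (Y := FIObj.of β) ⟨f, f.injective⟩).hom

lemma act_act (f : α ↪ β) (g : β ↪ γ) (x : M.space α) :
    M.act g (M.act f x) = M.act (f.trans g) x :=
  (ConcreteCategory.congr_hom (M.map_comp (X := FIObj.of α) (Y := FIObj.of β) (Z := FIObj.of γ)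
    ⟨f, f.injective⟩ ⟨g, g.injective⟩) x).symm

lemma act_refl (x : M.space α) : M.act (Embedding.refl α) x = x :=
  ConcreteCategory.congr_hom (M.map_id (FIObj.of α)) x

lemma app_act (φ : M ⟶ N) (f : α ↪ β) (x : M.space α) :
    φ.app (FIObj.of β) (M.act f x) = N.act f (φ.app (FIObj.of α) x) :=
  ConcreteCategory.congr_hom (φ.naturality (X := FIObj.of α) (Y := FIObj.of β) ⟨f, f.injective⟩) x

/-- The isomorphism `M(α) ≃ M(β)` induced by a bijection. -/
def actEquiv (M : FIMod) (e : α ≃ β) : M.space α ≃ₗ[ℂ] M.space β :=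
  LinearEquiv.ofLinearMap (M.act e.toEmbedding) (M.act e.symm.toEmbedding)
    (LinearMap.ext fun x => by simp [act_act, act_refl])
    (LinearMap.ext fun x => by simp [act_act, act_refl])

lemma finrank_space_eq_of_card_eq (M : FIMod) (h : Fintype.card α = Fintype.card β) :
    Module.finrank ℂ (M.space α) = Module.finrank ℂ (M.space β) :=
  (M.actEquiv (Fintype.equivOfCardEq h)).finrank_eq

lemma act_eq_zero_iff_of_card_eq {f : α ↪ β} (g : α ↪ γ) (h : Fintype.card β = Fintype.card γ)
    {x : M.space α} : M.act f x = 0 ↔ M.act g x = 0 := by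
  obtain ⟨e, rfl⟩ := exists_equiv_trans_eq f g h
  rw [← act_act]
  exact (M.actEquiv e).map_eq_zero_iff.symm

/-- FI-modules all of whose values are finite-dimensional. -/
class PointwiseFinite (M : FIMod) : Prop where
  finiteDimensional : ∀ S, FiniteDimensional ℂ (M.obj S)

attribute [instance] PointwiseFinite.finiteDimensional

/-- The endofunctor of `FI` adjoining a point. -/
def optionFunctor : FIObj ⥤ FIObj where
  obj S := FIObj.of (Option S.α)
  map f := ⟨Option.map f.1, Option.map_injective f.2⟩
  map_id _ := Subtype.ext Option.map_id
  map_comp f g := Subtype.ext (Option.map_comp_map f.1 g.1).symm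

/-- The shifted FI-module `α ↦ M(α ⊔ {∗})`. -/
abbrev shift (M : FIMod) : FIMod := optionFunctor ⋙ M

instance [PointwiseFinite M] : PointwiseFinite M.shift where
  finiteDimensional S := inferInstanceAs (FiniteDimensional ℂ (M.obj (optionFunctor.obj S)))

lemma shift_act (f : α ↪ β) (x : M.space (Option α)) : M.shift.act f x = M.act f.optionMap x :=
  rfl

/-- The quotient of an FI-module by a sub-FI-module. -/
def quotient (M : FIMod) (P : FISub M) : FIMod where
  obj S := ModuleCat.of ℂ (M.obj S ⧸ P.carrier S)
  map f := ModuleCat.ofHom ((P.carrier _).mapQ (P.carrier _) (M.map f).hom (P.map_mem f))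
  map_id S := by
    ext x
    simp
  map_comp f g := by
    ext x
    simp

variable {P : FISub M}

instance [PointwiseFinite M] : PointwiseFinite (M.quotient P) where
  finiteDimensional S := inferInstanceAs (FiniteDimensional ℂ (M.obj S ⧸ P.carrier S))

/-- The projection of an FI-module onto a quotient. -/
def quotientMk (P : FISub M) (α : Type) [Fintype α] : M.space α →ₗ[ℂ] (M.quotient P).space α :=
  (P.carrier _).mkQ

lemma quotientMk_surjective (P : FISub M) (α : Type) [Fintype α] :
    Surjective (quotientMk P α) :=
  (P.carrier _).mkQ_surjective

lemma quotientMk_eq_zero_iff {x : M.space α} :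
    quotientMk P α x = 0 ↔ x ∈ P.carrier (FIObj.of α) :=
  Submodule.Quotient.mk_eq_zero _

lemma act_quotientMk (f : α ↪ β) (x : M.space α) :
    (M.quotient P).act f (quotientMk P α x) = quotientMk P β (M.act f x) :=
  rfl

/-- An isomorphism of FI-modules matching two sub-FI-modules induces one of the quotients. -/
def quotientIso (i : M ≅ N) (P : FISub M) (Q : FISub N)
    (h : ∀ S x, x ∈ P.carrier S ↔ i.hom.app S x ∈ Q.carrier S) : M.quotient P ≅ N.quotient Q :=
  NatIso.ofComponents
    (fun S => (Submodule.Quotient.equiv (P.carrier S) (Q.carrier S) (i.app S).toLinearEquiv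
      (Submodule.ext fun y => by
        obtain ⟨x, rfl⟩ := (i.app S).toLinearEquiv.surjective y
        exact (Submodule.mem_map_equiv _).trans (by simpa using h S x))).toModuleIso)
    (fun f => by
      refine ModuleCat.hom_ext (Submodule.linearMap_qext _ (LinearMap.ext fun x => ?_))
      exact congrArg (Submodule.mkQ _) (ConcreteCategory.congr_hom (i.hom.naturality f) x))

/-- The image of `M` in its shift under the maps `M(α) → M(α ⊔ {∗})`. -/
def shiftRange (M : FIMod) : FISub M.shift where
  carrier S := LinearMap.range (M.act (Embedding.some : S.α ↪ Option S.α))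
  map_mem {S T} f := by
    rintro _ ⟨y, rfl⟩
    let f' : S.α ↪ T.α := ⟨f.1, f.2⟩
    exact ⟨M.act f' y, (act_act f' _ y).trans (act_act .some f'.optionMap y).symm⟩

/-- The derivative `α ↦ M(α ⊔ {∗}) / M(α)`. -/
abbrev derivative (M : FIMod) : FIMod := M.shift.quotient M.shiftRange

lemma app_mem_range_act_iff (i : M ≅ N) (f : α ↪ β) {x : M.space β} :
    i.hom.app (FIObj.of β) x ∈ LinearMap.range (N.act f) ↔ x ∈ LinearMap.range (M.act f) := by
  constructor
  · rintro ⟨y, hy⟩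
    refine ⟨i.inv.app _ y, ?_⟩
    rw [← app_act, hy]
    simp
  · rintro ⟨y, rfl⟩
    exact ⟨_, (app_act i.hom f y).symm⟩

lemma act_mem_range_act_trans_iff (f : α ↪ β) (e : β ≃ γ) {x : M.space β} :
    M.act e.toEmbedding x ∈ LinearMap.range (M.act (f.trans e.toEmbedding)) ↔
      x ∈ LinearMap.range (M.act f) :=
  exists_congr fun y => by
    rw [← act_act]
    exact (M.actEquiv e).injective.eq_iff

/-- The isomorphism of derivatives induced by an isomorphism of FI-modules. -/
def derivativeIso (i : M ≅ N) : M.derivative ≅ N.derivative :=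
  quotientIso (Functor.isoWhiskerLeft optionFunctor i) _ _ fun S _ =>
    (app_mem_range_act_iff i (Embedding.some : S.α ↪ Option S.α)).symm

/-- The transposition of the two points adjoined to `α` in `Option (Option α)`. -/
def optionSwap (α : Type*) : Option (Option α) ≃ Option (Option α) :=
  Involutive.toPerm
    (fun
      | none => some none
      | some none => none
      | some (some a) => some (some a))
    (by rintro (_ | _ | a) <;> rfl)

/-- `optionSwap` as an automorphism of the double shift. -/
def shiftSwapIso (M : FIMod) : M.shift.shift ≅ M.shift.shift :=
  NatIso.ofComponents (fun S => (M.actEquiv (optionSwap S.α)).toModuleIso) fun {S T} f => by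
    let f' : S.α ↪ T.α := ⟨f.1, f.2⟩
    have hcomm : f'.optionMap.optionMap.trans (optionSwap T.α).toEmbedding =
        (optionSwap S.α).toEmbedding.trans f'.optionMap.optionMap :=
      DFunLike.ext _ _ (by rintro (_ | _ | a) <;> rfl)
    refine ModuleCat.hom_ext (LinearMap.ext fun x => ?_)
    refine (act_act f'.optionMap.optionMap (optionSwap T.α).toEmbedding x).trans ?_
    rw [hcomm]
    exact (act_act (optionSwap S.α).toEmbedding f'.optionMap.optionMap x).symm

/-- The shift commutes with the derivative, after exchanging the two adjoined points. -/
def shiftDerivativeIso (M : FIMod) : M.derivative.shift ≅ M.shift.derivative :=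
  let P : FISub M.shift.shift :=
    { carrier := fun S => M.shiftRange.carrier (optionFunctor.obj S)
      map_mem := fun f => M.shiftRange.map_mem (optionFunctor.map f) }
  show M.shift.shift.quotient P ≅ M.shift.derivative from
    quotientIso M.shiftSwapIso P M.shift.shiftRange fun S x => by
      have hswap : (Embedding.some : S.α ↪ Option S.α).optionMap =
          Embedding.some.trans (optionSwap S.α).toEmbedding :=
        DFunLike.ext _ _ (by rintro (_ | a) <;> rfl)
      change _ ↔ M.act (optionSwap S.α).toEmbedding x ∈
        LinearMap.range (M.act (Embedding.some : S.α ↪ Option S.α).optionMap)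
      rw [hswap]
      exact (act_mem_range_act_trans_iff .some (optionSwap S.α)).symm

/-- The projection `M(α ⊔ {∗}) → (derivative M)(α)`. -/
def derivativeMk (M : FIMod) (α : Type) [Fintype α] :
    M.space (Option α) →ₗ[ℂ] M.derivative.space α :=
  quotientMk M.shiftRange α

lemma derivativeMk_surjective (M : FIMod) (α : Type) [Fintype α] :
    Surjective (M.derivativeMk α) :=
  quotientMk_surjective M.shiftRange α

lemma exact_act_some_derivativeMk (M : FIMod) (α : Type) [Fintype α] :
    Exact (M.act (.some : α ↪ Option α)) (M.derivativeMk α) :=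
  fun _ => quotientMk_eq_zero_iff (P := M.shiftRange)

lemma act_derivativeMk (f : α ↪ β) (x : M.space (Option α)) :
    M.derivative.act f (M.derivativeMk α x) = M.derivativeMk β (M.act f.optionMap x) :=
  rfl

/-! ## Degrees of generators -/

/-- The subspace of `M(α)` spanned by the images of all `M(β)` with `|β| < d`. -/
def spanBelow (M : FIMod) (d : ℕ) (α : Type) [Fintype α] : Submodule ℂ (M.space α) :=
  Submodule.span ℂ {x | ∃ (β : Type) (_ : Fintype β) (f : β ↪ α) (y : M.space β),
    Fintype.card β < d ∧ M.act f y = x}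

lemma act_mem_spanBelow {d : ℕ} (f : β ↪ α) (hβ : Fintype.card β < d) (y : M.space β) :
    M.act f y ∈ M.spanBelow d α :=
  Submodule.subset_span ⟨β, _, f, y, hβ, rfl⟩

lemma spanBelow_le {d : ℕ} {V : Submodule ℂ (M.space α)}
    (h : ∀ (β : Type) [Fintype β] (f : β ↪ α) (y : M.space β),
      Fintype.card β < d → M.act f y ∈ V) : M.spanBelow d α ≤ V :=
  Submodule.span_le.2 <| by
    rintro _ ⟨β, _, f, y, hβ, rfl⟩
    exact h β f y hβ

lemma spanBelow_le_comap_act {d d' : ℕ} (hd : d ≤ d') (f : α ↪ β) :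
    M.spanBelow d α ≤ (M.spanBelow d' β).comap (M.act f) :=
  spanBelow_le fun γ _ g y hγ => by
    rw [Submodule.mem_comap, act_act]
    exact act_mem_spanBelow _ (hγ.trans_le hd) y

/-- `M` is generated by elements of degree less than `d`. -/
def GeneratedBelow (d : ℕ) (M : FIMod) : Prop :=
  ∀ (α : Type) [Fintype α], M.spanBelow d α = ⊤

lemma exists_trans_some_eq {α β : Type*} (f : α ↪ Option β) (hf : ∀ a, f a ≠ none) :
    ∃ g : α ↪ β, g.trans .some = f := by
  choose g hg using fun a => Option.ne_none_iff_exists.1 (hf a)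
  exact ⟨⟨g, fun a b hab => f.injective (by rw [← hg, ← hg, hab])⟩, DFunLike.ext _ _ hg⟩

lemma exists_equiv_option_trans_optionMap_eq {α β : Type*} {f : α ↪ Option β} {a : α}
    (ha : f a = none) :
    ∃ (e : α ≃ Option {b // b ≠ a}) (g : {b // b ≠ a} ↪ β),
      e.toEmbedding.trans g.optionMap = f := by
  classical
  obtain ⟨g, hg⟩ := exists_trans_some_eq ((Embedding.subtype (· ≠ a)).trans f)
    fun b hb => b.2 (f.injective (hb.trans ha.symm))
  have hg' (b) (hb : b ≠ a) : some (g ⟨b, hb⟩) = f b := DFunLike.congr_fun hg ⟨b, hb⟩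
  refine ⟨(Equiv.optionSubtypeNe a).symm, g, DFunLike.ext _ _ fun b => ?_⟩
  by_cases hb : b = a
  · subst hb
    simp [ha]
  · simp [Equiv.optionSubtypeNe_symm_of_ne hb, hg']

lemma GeneratedBelow.derivative {d : ℕ} (h : GeneratedBelow (d + 1) M) :
    GeneratedBelow d M.derivative := fun β _ => by
  classical
  suffices hle : M.spanBelow (d + 1) (Option β) ≤
      (M.derivative.spanBelow d β).comap (M.derivativeMk β) by
    refine eq_top_iff.2 fun y _ => ?_
    obtain ⟨x, rfl⟩ := M.derivativeMk_surjective β y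
    exact hle (h (Option β) ▸ Submodule.mem_top)
  refine spanBelow_le fun γ _ f z hγ => ?_
  rw [Submodule.mem_comap]
  by_cases hf : ∀ c, f c ≠ none
  · obtain ⟨g, rfl⟩ := exists_trans_some_eq f hf
    rw [← act_act, (M.exact_act_some_derivativeMk β).apply_apply_eq_zero]
    exact zero_mem _
  · push Not at hf
    obtain ⟨c, hc⟩ := hf
    obtain ⟨e, g, rfl⟩ := exists_equiv_option_trans_optionMap_eq hc
    rw [← act_act, ← act_derivativeMk]
    refine act_mem_spanBelow g ?_ _
    have := Fintype.card_congr e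
    rw [Fintype.card_option] at this
    omega

/-! ## Injectivity in large degrees -/

/-- The maps `M(α) → M(α ⊔ {∗})` are injective for `|α| ≥ r`. -/
def InjectiveFrom (r : ℕ) (M : FIMod) : Prop :=
  ∀ (α : Type) [Fintype α], r ≤ Fintype.card α → Injective (M.act (.some : α ↪ Option α))

/-- The kernel of `M(α) → M(β)` for `|β| = |α| + m`. -/
def extensionKer (M : FIMod) (α : Type) [Fintype α] (m : ℕ) : Submodule ℂ (M.space α) :=
  LinearMap.ker (M.act (.inl : α ↪ α ⊕ Fin m))

lemma mem_extensionKer_iff {m : ℕ} (f : α ↪ β) (h : Fintype.card β = Fintype.card α + m)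
    {x : M.space α} : x ∈ M.extensionKer α m ↔ M.act f x = 0 :=
  LinearMap.mem_ker.trans (act_eq_zero_iff_of_card_eq f (by simp [h]))

lemma extensionKer_succ {m : ℕ} {x : M.space α} :
    x ∈ M.extensionKer α (m + 1) ↔
      M.act (.some : α ⊕ Fin m ↪ _) (M.act (.inl : α ↪ α ⊕ Fin m) x) = 0 := by
  rw [act_act]
  exact mem_extensionKer_iff _ (by simp [add_assoc])

lemma extensionKer_mono (M : FIMod) (α : Type) [Fintype α] : Monotone (M.extensionKer α) :=
  monotone_nat_of_le_succ fun m x hx => by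
    rw [extensionKer_succ, LinearMap.mem_ker.1 hx, map_zero]

lemma InjectiveFrom.act_injective {r : ℕ} (h : InjectiveFrom r M) (f : α ↪ β)
    (hα : r ≤ Fintype.card α) : Injective (M.act f) := by
  have hker (m : ℕ) : M.extensionKer α m = ⊥ := by
    induction m with
    | zero =>
      refine (Submodule.eq_bot_iff _).2 fun x hx => ?_
      rwa [mem_extensionKer_iff (.refl α) (by simp), act_refl] at hx
    | succ m ih =>
      refine (Submodule.eq_bot_iff _).2 fun x hx => (Submodule.eq_bot_iff _).1 ih x ?_
      have hinj := h (α ⊕ Fin m) (by simp; omega)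
      exact (map_eq_zero_iff _ hinj).1 (extensionKer_succ.1 hx)
  refine (injective_iff_map_eq_zero _).2 fun x hx => ?_
  have hcard := Nat.exists_eq_add_of_le (Fintype.card_le_of_embedding f)
  obtain ⟨m, hm⟩ := hcard
  exact (Submodule.eq_bot_iff _).1 (hker m) x ((mem_extensionKer_iff f hm).2 hx)

lemma mem_range_act_some_of_act_eq_zero {r : ℕ} (h : InjectiveFrom r M.derivative)
    (hα : r ≤ Fintype.card α) (g : Option α ↪ γ) {x : M.space (Option α)} (hx : M.act g x = 0) :
    x ∈ LinearMap.range (M.act (.some : α ↪ Option α)) := by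
  obtain ⟨m, hm⟩ := Nat.exists_eq_add_of_le (Fintype.card_le_of_embedding g)
  let i : α ↪ α ⊕ Fin m := .inl
  refine ((M.exact_act_some_derivativeMk α) x).1 (h.act_injective i hα ?_)
  have hx' : M.act i.optionMap x = 0 :=
    (act_eq_zero_iff_of_card_eq g (by simp [hm]; ring)).2 hx
  rw [act_derivativeMk, hx', map_zero, map_zero]

lemma exists_mem_range_act_of_act_eq_zero {r : ℕ} (h : InjectiveFrom r M.derivative)
    (hβ : r ≤ Fintype.card β) (g : β ↪ γ) {x : M.space β} (hx : M.act g x = 0) :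
    ∃ f : Fin r ↪ β, x ∈ LinearMap.range (M.act f) := by
  obtain ⟨j, hj⟩ := Nat.exists_eq_add_of_le hβ
  induction j generalizing β with
  | zero =>
    let e : Fin r ≃ β := (Fintype.equivFinOfCardEq hj).symm
    exact ⟨e.toEmbedding, (M.actEquiv e).surjective x⟩
  | succ j ih =>
    let e : Option (Fin (r + j)) ≃ β := Fintype.equivOfCardEq (by simp [hj, add_assoc])
    obtain ⟨x, rfl⟩ := (M.actEquiv e).surjective x
    have hx' : M.act (e.toEmbedding.trans g) x = 0 := by rwa [← act_act]
    obtain ⟨y, rfl⟩ := mem_range_act_some_of_act_eq_zero h (by simp) _ hx'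
    rw [act_act] at hx'
    obtain ⟨f, z, rfl⟩ := ih (by simp) _ hx' (by simp)
    refine ⟨(f.trans .some).trans e.toEmbedding, z, ?_⟩
    rw [← act_act, ← act_act]
    rfl

/-- Every element killed by a structure map comes from `M(r)`, where the kernels of
`M(r) → M(r + m)` stabilise. -/
lemma InjectiveFrom.of_derivative [PointwiseFinite M] {r : ℕ} (h : InjectiveFrom r M.derivative) :
    ∃ r', InjectiveFrom r' M := by
  obtain ⟨m₀, hm₀⟩ := monotone_stabilizes_iff_noetherian.2
    (inferInstance : IsNoetherian ℂ (M.space (Fin r))) ⟨_, M.extensionKer_mono (Fin r)⟩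
  refine ⟨r + m₀, fun α _ hα => (injective_iff_map_eq_zero _).2 fun x hx => ?_⟩
  obtain ⟨f, z, rfl⟩ := exists_mem_range_act_of_act_eq_zero h (by omega) _ hx
  obtain ⟨j, hj⟩ := Nat.exists_eq_add_of_le hα
  have hz : z ∈ M.extensionKer (Fin r) (m₀ + j + 1) := by
    rw [mem_extensionKer_iff (f.trans .some) (by simp [hj]; ring), ← act_act, hx]
  have hstable : M.extensionKer (Fin r) (m₀ + j + 1) = M.extensionKer (Fin r) (m₀ + j) :=
    (hm₀ _ (by omega)).symm.trans (hm₀ _ (by omega))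
  rw [hstable] at hz
  exact (mem_extensionKer_iff f (by simp [hj]; ring)).1 hz

/-- In degrees at least `r`, the structure maps of `M` and of its first `k - 1` derivatives are
injective and the `k`-th derivative vanishes. -/
def HasInjectiveDerivatives : ℕ → ℕ → FIMod → Prop
  | 0, r, M => ∀ (α : Type) [Fintype α], r ≤ Fintype.card α → Subsingleton (M.space α)
  | k + 1, r, M => InjectiveFrom r M ∧ HasInjectiveDerivatives k r M.derivative

namespace HasInjectiveDerivatives

variable {k r : ℕ}

lemma injectiveFrom (h : HasInjectiveDerivatives k r M) : InjectiveFrom r M := by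
  cases k with
  | zero =>
    intro α _ hα
    have := h α hα
    exact injective_of_subsingleton _
  | succ k => exact h.1

lemma mono {r' : ℕ} (hr : r ≤ r') (h : HasInjectiveDerivatives k r M) :
    HasInjectiveDerivatives k r' M := by
  induction k generalizing M with
  | zero => exact fun α _ hα => h α (hr.trans hα)
  | succ k ih => exact ⟨fun α _ hα => h.1 α (hr.trans hα), ih h.2⟩

lemma derivative (h : HasInjectiveDerivatives k r M) :
    HasInjectiveDerivatives (k - 1) r M.derivative := by
  cases k with
  | zero =>
    intro α _ hα
    have := h (Option α) (by rw [Fintype.card_option]; omega)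
    exact (M.derivativeMk_surjective α).subsingleton
  | succ k => exact h.2

lemma of_iso (i : M ≅ N) (h : HasInjectiveDerivatives k r M) : HasInjectiveDerivatives k r N := by
  induction k generalizing M N with
  | zero =>
    intro α _ hα
    have := h α hα
    exact (i.app (FIObj.of α)).toLinearEquiv.symm.toEquiv.subsingleton
  | succ k ih =>
    refine ⟨fun α _ hα => (injective_iff_map_eq_zero _).2 fun x hx => ?_, ih (derivativeIso i) h.2⟩
    obtain ⟨x, rfl⟩ := (i.app (FIObj.of α)).toLinearEquiv.surjective x
    have hx' : (i.app (FIObj.of (Option α))).toLinearEquiv (M.act .some x) = 0 :=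
      (app_act i.hom _ x).trans hx
    rw [LinearEquiv.map_eq_zero_iff] at hx' ⊢
    exact (map_eq_zero_iff _ (h.1 α hα)).1 hx'

lemma shift (h : HasInjectiveDerivatives k (r + 1) M) : HasInjectiveDerivatives k r M.shift := by
  induction k generalizing M with
  | zero => exact fun α _ hα => h (Option α) (by rw [Fintype.card_option]; omega)
  | succ k ih =>
    refine ⟨fun α _ hα => ?_, (ih h.2).of_iso M.shiftDerivativeIso⟩
    have hα' : r + 1 ≤ Fintype.card (Option α) := by rw [Fintype.card_option]; omega
    exact h.injectiveFrom.act_injective Embedding.some.optionMap hα'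

end HasInjectiveDerivatives

lemma GeneratedBelow.hasInjectiveDerivatives [PointwiseFinite M] {d : ℕ} (h : GeneratedBelow d M) :
    ∃ r, HasInjectiveDerivatives d r M := by
  induction d generalizing M with
  | zero =>
    refine ⟨0, fun α _ _ => (Submodule.subsingleton_iff ℂ).1 (subsingleton_of_bot_eq_top ?_)⟩
    rw [eq_comm, eq_bot_iff, ← h α]
    exact spanBelow_le fun β _ f y hβ => absurd hβ (Nat.not_lt_zero _)
  | succ d ih =>
    obtain ⟨r, hr⟩ := ih h.derivative
    obtain ⟨r', hr'⟩ := hr.injectiveFrom.of_derivative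
    exact ⟨max r r', fun α _ hα => hr' α ((le_max_right _ _).trans hα), hr.mono (le_max_left _ _)⟩

end FIMod

namespace FIMod

open Function Module

variable {M : FIMod} {α β : Type} [Fintype α] [Fintype β]

/-! ## Indecomposables -/

/-- The sub-FI-module whose value at `α` is spanned by the images of all `M(β)` with `|β| < |α|`. -/
def decomposables (M : FIMod) : FISub M where
  carrier S := M.spanBelow (Fintype.card S.α) S.α
  map_mem {S T} f :=
    spanBelow_le_comap_act (Fintype.card_le_of_injective f.1 f.2) (⟨f.1, f.2⟩ : S.α ↪ T.α)

/-- The minimal generators `H₀(M)`: the quotient of `M` by its decomposable elements. -/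
abbrev indecomposables (M : FIMod) : FIMod := M.quotient M.decomposables

/-- The projection `M(α) → H₀(M)(α)`. -/
def indecomposablesMk (M : FIMod) (α : Type) [Fintype α] :
    M.space α →ₗ[ℂ] M.indecomposables.space α :=
  quotientMk M.decomposables α

lemma indecomposablesMk_surjective (M : FIMod) (α : Type) [Fintype α] :
    Surjective (M.indecomposablesMk α) :=
  quotientMk_surjective _ α

lemma indecomposablesMk_eq_zero_iff {x : M.space α} :
    M.indecomposablesMk α x = 0 ↔ x ∈ M.spanBelow (Fintype.card α) α :=
  quotientMk_eq_zero_iff (P := M.decomposables)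

lemma act_indecomposablesMk (f : α ↪ β) (x : M.space α) :
    M.indecomposables.act f (M.indecomposablesMk α x) = M.indecomposablesMk β (M.act f x) :=
  act_quotientMk f x

lemma spanBelow_derivative_le_map (M : FIMod) (d : ℕ) (α : Type) [Fintype α] :
    M.derivative.spanBelow d α ≤ (M.spanBelow (d + 1) (Option α)).map (M.derivativeMk α) :=
  spanBelow_le fun β _ f y hβ => by
    obtain ⟨y, rfl⟩ := M.derivativeMk_surjective β y
    exact ⟨_, act_mem_spanBelow f.optionMap (by simpa using hβ) y, (act_derivativeMk f y).symm⟩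

lemma mem_spanBelow_of_derivativeMk_mem {x : M.space (Option α)}
    (hx : M.derivativeMk α x ∈ M.derivative.spanBelow (Fintype.card α) α) :
    x ∈ M.spanBelow (Fintype.card (Option α)) (Option α) := by
  rw [Fintype.card_option]
  obtain ⟨x', hx', heq⟩ := spanBelow_derivative_le_map M _ α hx
  obtain ⟨y, hy⟩ := (M.exact_act_some_derivativeMk α (x - x')).1 (by rw [map_sub, heq, sub_self])
  rw [← sub_add_cancel x x', ← hy]
  exact add_mem (act_mem_spanBelow _ (Nat.lt_succ_self _) y) hx'

section PointwiseFinite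

variable [PointwiseFinite M]

lemma finrank_indecomposables_option_le (M : FIMod) [PointwiseFinite M] (α : Type) [Fintype α] :
    finrank ℂ (M.indecomposables.space (Option α)) ≤
      finrank ℂ (M.derivative.indecomposables.space α) :=
  finrank_le_of_surjective_of_ker_le
    (f := M.derivative.indecomposablesMk α ∘ₗ M.derivativeMk α)
    ((M.derivative.indecomposablesMk_surjective α).comp (M.derivativeMk_surjective α))
    (M.indecomposablesMk_surjective (Option α)) fun _ hx =>
      indecomposablesMk_eq_zero_iff.2
        (mem_spanBelow_of_derivativeMk_mem (indecomposablesMk_eq_zero_iff.1 hx))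

lemma HasInjectiveDerivatives.finrank_indecomposables_eq_zero {k : ℕ}
    (h : HasInjectiveDerivatives k 0 M) (hα : k ≤ Fintype.card α) :
    finrank ℂ (M.indecomposables.space α) = 0 := by
  induction k generalizing M α with
  | zero =>
    have := h α (Nat.zero_le _)
    have := (M.indecomposablesMk_surjective α).subsingleton
    exact finrank_zero_of_subsingleton
  | succ k ih =>
    obtain ⟨n, hn⟩ := Nat.exists_eq_add_of_le hα
    rw [finrank_space_eq_of_card_eq _ (β := Option (Fin (k + n))) (by simp [hn]; ring)]
    exact Nat.eq_zero_of_le_zero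
      ((M.finrank_indecomposables_option_le _).trans_eq (ih h.2 (by simp)))

lemma finrank_space_option_of_injective (h : Injective (M.act (.some : α ↪ Option α))) :
    finrank ℂ (M.space (Option α)) =
      finrank ℂ (M.space α) + finrank ℂ (M.derivative.space α) := by
  rw [← LinearMap.finrank_range_add_finrank_ker (M.derivativeMk α),
    LinearMap.range_eq_top.2 (M.derivativeMk_surjective α), finrank_top,
    (M.exact_act_some_derivativeMk α).linearMap_ker_eq, LinearMap.finrank_range_of_inj h, add_comm]

lemma HasInjectiveDerivatives.sum_powerset_finrank_indecomposables_le {k : ℕ}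
    (h : HasInjectiveDerivatives k 0 M) (n : ℕ) :
    ∑ A ∈ (Finset.range n).powerset, finrank ℂ (M.indecomposables.space (Fin A.card)) ≤
      finrank ℂ (M.space (Fin n)) := by
  have hoption (N : FIMod) (m : ℕ) :
      finrank ℂ (N.space (Fin (m + 1))) = finrank ℂ (N.space (Option (Fin m))) :=
    N.finrank_space_eq_of_card_eq (by simp)
  induction n generalizing k M with
  | zero =>
    rw [Finset.range_zero, Finset.powerset_empty, Finset.sum_singleton]
    exact LinearMap.finrank_le_finrank_of_surjective (M.indecomposablesMk_surjective (Fin 0))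
  | succ n ih =>
    rw [Finset.range_add_one, Finset.sum_powerset_insert Finset.notMem_range_self, hoption,
      finrank_space_option_of_injective (h.injectiveFrom _ (Nat.zero_le _))]
    refine add_le_add (ih h) ((Finset.sum_le_sum fun A hA => ?_).trans (ih h.derivative))
    have hn : n ∉ A := fun hn => Finset.notMem_range_self (Finset.mem_powerset.1 hA hn)
    rw [Finset.card_insert_of_notMem hn, hoption]
    exact M.finrank_indecomposables_option_le _

lemma HasInjectiveDerivatives.sum_finrank_indecomposables_le {k : ℕ}
    (h : HasInjectiveDerivatives k 0 M) (α : Type) [Fintype α] :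
    ∑ A : Finset α, finrank ℂ (M.indecomposables.space A) ≤ finrank ℂ (M.space α) := by
  let rank (m : ℕ) : ℕ := finrank ℂ (M.indecomposables.space (Fin m))
  calc ∑ A : Finset α, finrank ℂ (M.indecomposables.space A)
      = ∑ A ∈ (Finset.univ : Finset α).powerset, rank A.card := by
        rw [Finset.powerset_univ]
        exact Finset.sum_congr rfl fun A _ => finrank_space_eq_of_card_eq _ (by simp)
    _ = ∑ A ∈ (Finset.range (Fintype.card α)).powerset, rank A.card := by
        rw [Finset.sum_powerset_apply_card, Finset.sum_powerset_apply_card, Finset.card_range,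
          Finset.card_univ]
    _ ≤ finrank ℂ (M.space (Fin (Fintype.card α))) :=
        h.sum_powerset_finrank_indecomposables_le _
    _ = finrank ℂ (M.space α) := finrank_space_eq_of_card_eq _ (by simp)

end PointwiseFinite

lemma exists_rightInverse_indecomposablesMk (M : FIMod) (α : Type) [Fintype α] :
    ∃ s : M.indecomposables.space α →ₗ[ℂ] M.space α, M.indecomposablesMk α ∘ₗ s = .id :=
  (M.indecomposablesMk α).exists_rightInverse_of_surjective
    (LinearMap.range_eq_top.2 (M.indecomposablesMk_surjective α))

/-- A linear (not equivariant) section of `M(α) → H₀(M)(α)`. -/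
noncomputable def indecomposablesSection (M : FIMod) (α : Type) [Fintype α] :
    M.indecomposables.space α →ₗ[ℂ] M.space α :=
  (M.exists_rightInverse_indecomposablesMk α).choose

lemma indecomposablesMk_indecomposablesSection (w : M.indecomposables.space α) :
    M.indecomposablesMk α (M.indecomposablesSection α w) = w :=
  LinearMap.congr_fun (M.exists_rightInverse_indecomposablesMk α).choose_spec w

/-- The map `⨁_{A ⊆ α} H₀(M)(A) → M(α)` that lifts each summand to `M(A)` and pushes it forward
to `M(α)`. -/
noncomputable def ofIndecomposables (M : FIMod) (α : Type) [Fintype α] :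
    (∀ A : Finset α, M.indecomposables.space A) →ₗ[ℂ] M.space α :=
  ∑ A : Finset α, (M.act (.subtype (· ∈ A)) ∘ₗ M.indecomposablesSection A) ∘ₗ LinearMap.proj A

lemma ofIndecomposables_single [DecidableEq α] (A : Finset α) (w : M.indecomposables.space A) :
    M.ofIndecomposables α (Pi.single A w) =
      M.act (.subtype (· ∈ A)) (M.indecomposablesSection A w) := by
  simp only [ofIndecomposables, LinearMap.sum_apply, LinearMap.comp_apply, LinearMap.proj_apply]
  rw [Finset.sum_eq_single_of_mem A (Finset.mem_univ A) fun B _ hB => by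
    rw [Pi.single_eq_of_ne hB, map_zero, map_zero], Pi.single_eq_same]

lemma exists_ssubset_trans_subtype_eq {β α : Type*} [Fintype β] {B : Finset α}
    (f : β ↪ B) (hβ : Fintype.card β < Fintype.card B) :
    ∃ A ⊂ B, ∃ g : β ↪ A, g.trans (.subtype (· ∈ A)) = f.trans (.subtype (· ∈ B)) := by
  let A : Finset α := Finset.univ.map (f.trans (.subtype (· ∈ B)))
  have hcard : A.card = Fintype.card β := Finset.card_map _
  have hAB : A ⊆ B := fun a ha => by
    obtain ⟨b, -, rfl⟩ := Finset.mem_map.1 ha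
    exact (f b).2
  refine ⟨A, hAB.ssubset_of_ne ?_,
    ⟨fun b => ⟨f b, Finset.mem_map_of_mem _ (Finset.mem_univ b)⟩, fun b c hbc => ?_⟩, rfl⟩
  · intro heq
    rw [Fintype.card_coe, ← heq, hcard] at hβ
    exact hβ.false
  · exact f.injective (Subtype.ext ((Subtype.mk_eq_mk (p := (· ∈ A))).1 hbc))

lemma exists_ofIndecomposables_eq_act (B : Finset α) (z : M.space B) :
    ∃ w, M.ofIndecomposables α w = M.act (.subtype (· ∈ B)) z ∧ (∀ A, ¬ A ⊆ B → w A = 0) ∧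
      w B = M.indecomposablesMk B z := by
  classical
  induction B using Finset.strongInduction with
  | H B ih =>
    let proper : Submodule ℂ (∀ A : Finset α, M.indecomposables.space A) :=
      .pi {A | ¬ A ⊂ B} fun _ => ⊥
    have hle : M.spanBelow (Fintype.card B) B ≤
        (proper.map (M.ofIndecomposables α)).comap (M.act (.subtype (· ∈ B))) :=
      spanBelow_le fun β _ f y hβ => by
        obtain ⟨A, hAB, g, hg⟩ := exists_ssubset_trans_subtype_eq f hβ
        obtain ⟨w, hw, hsupp, -⟩ := ih A hAB (M.act g y)
        exact ⟨w, fun C hC => hsupp C fun hCA => hC (hCA.trans_ssubset hAB), by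
          rw [hw, act_act, act_act, hg]⟩
    set z₀ := M.indecomposablesSection B (M.indecomposablesMk B z) with hz₀
    have hz : z - z₀ ∈ M.spanBelow (Fintype.card B) B := by
      rw [← indecomposablesMk_eq_zero_iff, map_sub, indecomposablesMk_indecomposablesSection,
        sub_self]
    obtain ⟨w, hw, hwz⟩ := hle hz
    refine ⟨w + Pi.single B (M.indecomposablesMk B z), ?_, fun A hA => ?_, ?_⟩
    · rw [map_add, hwz, ofIndecomposables_single, ← hz₀, ← map_add, sub_add_cancel]
    · have hne : A ≠ B := fun h => hA h.subset
      rw [Pi.add_apply, hw A fun h => hA h.subset, Pi.single_eq_of_ne hne, add_zero]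
    · rw [Pi.add_apply, hw B (ssubset_irrefl B), Pi.single_eq_same, zero_add]

lemma ofIndecomposables_surjective (M : FIMod) (α : Type) [Fintype α] :
    Surjective (M.ofIndecomposables α) := fun x => by
  let i : α ≃ (Finset.univ : Finset α) := (Equiv.subtypeUnivEquiv Finset.mem_univ).symm
  obtain ⟨w, hw, -⟩ := exists_ofIndecomposables_eq_act Finset.univ (M.act i.toEmbedding x)
  exact ⟨w, hw.trans ((act_act _ _ x).trans (act_refl x))⟩

namespace HasInjectiveDerivatives

variable {k : ℕ} [PointwiseFinite M]

lemma ofIndecomposables_bijective (h : HasInjectiveDerivatives k 0 M) (α : Type) [Fintype α] :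
    Bijective (M.ofIndecomposables α) := by
  have hsurj := M.ofIndecomposables_surjective α
  have hdim : finrank ℂ (∀ A : Finset α, M.indecomposables.space A) = finrank ℂ (M.space α) :=
    le_antisymm ((finrank_pi_fintype ℂ).trans_le (h.sum_finrank_indecomposables_le α))
      (LinearMap.finrank_le_finrank_of_surjective hsurj)
  exact ⟨(LinearMap.injective_iff_surjective_of_finrank_eq_finrank hdim).2 hsurj, hsurj⟩

/-- The decomposition `⨁_{A ⊆ α} H₀(M)(A) ≃ M(α)` of an FI-module whose structure maps, and those
of its iterated derivatives, are all injective. -/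
noncomputable def indecomposablesEquiv (h : HasInjectiveDerivatives k 0 M) (α : Type) [Fintype α] :
    (∀ A : Finset α, M.indecomposables.space A) ≃ₗ[ℂ] M.space α :=
  .ofBijective (M.ofIndecomposables α) (h.ofIndecomposables_bijective α)

lemma indecomposablesEquiv_symm_act_self (h : HasInjectiveDerivatives k 0 M) (B : Finset α)
    (z : M.space B) :
    (h.indecomposablesEquiv α).symm (M.act (.subtype (· ∈ B)) z) B = M.indecomposablesMk B z := by
  obtain ⟨w, hw, -, hwB⟩ := exists_ofIndecomposables_eq_act B z
  rw [← hwB, (h.indecomposablesEquiv α).symm_apply_eq.2 hw.symm]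

lemma indecomposablesEquiv_symm_act_of_not_subset (h : HasInjectiveDerivatives k 0 M)
    {A B : Finset α} (hAB : ¬ A ⊆ B) (z : M.space B) :
    (h.indecomposablesEquiv α).symm (M.act (.subtype (· ∈ B)) z) A = 0 := by
  obtain ⟨w, hw, hsupp, -⟩ := exists_ofIndecomposables_eq_act B z
  rw [← hsupp A hAB, (h.indecomposablesEquiv α).symm_apply_eq.2 hw.symm]

end HasInjectiveDerivatives

/-! ## Characters -/

/-- The trace of a permutation of `α` on `M(α)`. -/
noncomputable def character (M : FIMod) (σ : Equiv.Perm α) : ℂ :=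
  LinearMap.trace ℂ (M.space α) (M.act σ.toEmbedding)

lemma character_permCongr (M : FIMod) (e : α ≃ β) (σ : Equiv.Perm α) :
    M.character (e.permCongr σ) = M.character σ := by
  refine (trace_eq_of_intertwines (M.actEquiv e) fun x => ?_).symm
  have hcomm : σ.toEmbedding.trans e.toEmbedding =
      e.toEmbedding.trans (e.permCongr σ).toEmbedding :=
    DFunLike.ext _ _ fun a => by simp
  exact (act_act _ _ x).trans ((congrArg (M.act · x) hcomm).trans (act_act _ _ x).symm)

lemma character_shift [PointwiseFinite M] (h : Injective (M.act (.some : α ↪ Option α)))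
    (σ : Equiv.Perm α) :
    M.shift.character σ = M.character σ + M.derivative.character σ :=
  trace_eq_add_of_exact h (M.derivativeMk_surjective α) (M.exact_act_some_derivativeMk α)
    (fun x => (shift_act _ _).trans
      ((act_act .some σ.toEmbedding.optionMap x).trans (act_act σ.toEmbedding .some x).symm))
    fun _ => rfl

/-- Under `indecomposablesEquiv`, a summand `H₀(M)(A)` that `σ` moves to a different one
contributes nothing to the trace. -/
lemma HasInjectiveDerivatives.character_eq_sum [PointwiseFinite M] {k : ℕ}
    (h : HasInjectiveDerivatives k 0 M) (σ : Equiv.Perm α) [DecidableEq α] :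
    M.character σ = ∑ A : Finset α, if hA : ∀ x, σ x ∈ A ↔ x ∈ A then
      M.indecomposables.character (σ.subtypePerm hA) else 0 := by
  let e := h.indecomposablesEquiv α
  have hconj : M.character σ = LinearMap.trace ℂ _ (e.symm.conj (M.act σ.toEmbedding)) :=
    (LinearMap.trace_conj' _ _).symm
  rw [hconj, trace_pi_eq_sum]
  refine Finset.sum_congr rfl fun A _ => ?_
  have hblock (w : M.indecomposables.space A) :
      e.symm.conj (M.act σ.toEmbedding) (Pi.single A w) =
        e.symm (M.act ((Embedding.subtype (· ∈ A)).trans σ.toEmbedding)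
          (M.indecomposablesSection A w)) := by
    rw [← act_act, ← ofIndecomposables_single]
    rfl
  split_ifs with hA
  · refine congrArg _ (LinearMap.ext fun w => ?_)
    change e.symm.conj (M.act σ.toEmbedding) (Pi.single A w) A = _
    have hsub : (Embedding.subtype (· ∈ A)).trans σ.toEmbedding =
        (σ.subtypePerm hA).toEmbedding.trans (.subtype (· ∈ A)) := rfl
    rw [hblock, hsub, ← act_act, h.indecomposablesEquiv_symm_act_self, ← act_indecomposablesMk,
      indecomposablesMk_indecomposablesSection]
  · convert map_zero (LinearMap.trace ℂ (M.indecomposables.space A))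
    refine LinearMap.ext fun w => ?_
    change e.symm.conj (M.act σ.toEmbedding) (Pi.single A w) A = 0
    let B : Finset α := A.map σ.toEmbedding
    have hsub : (Embedding.subtype (· ∈ A)).trans σ.toEmbedding =
        (A.equivMap σ.toEmbedding).toEmbedding.trans (.subtype (· ∈ B)) := rfl
    have hAB : ¬ A ⊆ B := fun hAB => hA fun x => by
      have hEq : A = B := Finset.eq_of_subset_of_card_le hAB (by simp [B])
      conv_lhs => rw [hEq]
      simp [B]
    rw [hblock, hsub, ← act_act, h.indecomposablesEquiv_symm_act_of_not_subset hAB]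

end FIMod

/-! ## Exponential generating series in infinitely many variables -/

section ExponentialSeries

open MvPowerSeries Finsupp

lemma partFactorial_ne_zero (e : ℕ →₀ ℕ) : partFactorial e ≠ 0 :=
  Finset.prod_ne_zero_iff.2 fun i _ => Nat.cast_ne_zero.2 (Nat.factorial_ne_zero (e i))

lemma partFactorial_add_single (e : ℕ →₀ ℕ) (j : ℕ) :
    partFactorial (e + single j 1) = partFactorial e * (e j + 1) := by
  have hprod (u : ℕ →₀ ℕ) (hu : u.support ⊆ insert j e.support) :
      partFactorial u = ∏ i ∈ insert j e.support, (Nat.factorial (u i) : ℚ) :=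
    Finset.prod_subset hu fun i _ hi => by simp [notMem_support_iff.1 hi]
  have hsupport : (e + single j 1).support ⊆ insert j e.support := fun i => by
    by_cases hij : i = j <;> simp [hij]
  rw [hprod _ hsupport, hprod e (Finset.subset_insert _ _),
    ← Finset.mul_prod_erase _ _ (Finset.mem_insert_self j e.support),
    ← Finset.mul_prod_erase _ _ (Finset.mem_insert_self j e.support)]
  have hrest :
      ∏ i ∈ (insert j e.support).erase j, (Nat.factorial ((e + single j 1 : ℕ →₀ ℕ) i) : ℚ) =
      ∏ i ∈ (insert j e.support).erase j, (Nat.factorial (e i) : ℚ) :=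
    Finset.prod_congr rfl fun i hi => by simp [single_eq_of_ne (Finset.ne_of_mem_erase hi)]
  rw [hrest, Finsupp.add_apply, single_eq_same, Nat.factorial_succ]
  push_cast
  ring

/-- The exponential generating series `∑ f(e) tᵉ / e!` of a function `f` on exponents, so that
the enhanced Hilbert series is the case where `f` is the character. -/
noncomputable def egf (f : (ℕ →₀ ℕ) → ℚ) : MvPowerSeries ℕ ℚ :=
  fun e => f e / partFactorial e

lemma coeff_egf (f : (ℕ →₀ ℕ) → ℚ) (e : ℕ →₀ ℕ) : coeff e (egf f) = f e / partFactorial e :=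
  rfl

lemma egf_eq_iff {f : (ℕ →₀ ℕ) → ℚ} {F : MvPowerSeries ℕ ℚ} :
    egf f = F ↔ ∀ e, f e = partFactorial e * coeff e F := by
  simp only [MvPowerSeries.ext_iff, coeff_egf, div_eq_iff (partFactorial_ne_zero _), mul_comm]

lemma egf_sub (f g : (ℕ →₀ ℕ) → ℚ) : egf (f - g) = egf f - egf g := by
  ext e
  simp only [map_sub, coeff_egf, Pi.sub_apply, sub_div]

lemma expTzero_eq_egf_one : expTzero = egf 1 := by
  ext e
  rw [coeff_egf, partFactorial, Pi.one_apply, ← Finset.prod_const_one, ← Finset.prod_div_distrib]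
  rfl

lemma expTzero_ne_zero : expTzero ≠ 0 := fun h => by
  have hcoeff : coeff 0 expTzero = 0 := by rw [h, map_zero]
  rw [expTzero_eq_egf_one, coeff_egf] at hcoeff
  exact div_ne_zero one_ne_zero (partFactorial_ne_zero 0) hcoeff

lemma pderiv_egf (j : ℕ) (f : (ℕ →₀ ℕ) → ℚ) :
    pderiv ℚ j (egf f) = egf fun e => f (e + single j 1) := by
  ext e
  have hsucc : (e j + 1 : ℚ) ≠ 0 := by positivity
  rw [coeff_pderiv, coeff_egf, coeff_egf, partFactorial_add_single, div_mul_eq_mul_div,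
    mul_div_mul_right _ _ hsucc]

lemma pderiv_expTzero (j : ℕ) : pderiv ℚ j expTzero = expTzero := by
  rw [expTzero_eq_egf_one, pderiv_egf]
  rfl

lemma partFactorial_mul_coeff_add_single (F : MvPowerSeries ℕ ℚ) (e : ℕ →₀ ℕ) (j : ℕ) :
    partFactorial (e + single j 1) * coeff (e + single j 1) F =
      partFactorial e * coeff e (pderiv ℚ j F) := by
  rw [coeff_pderiv, partFactorial_add_single]
  ring

/-- Multiplying by `exp(t₁ + t₂ + ⋯)` sums over subsets: this follows by differentiating once for
each element of `s`. -/
lemma partFactorial_mul_coeff_egf_mul_expTzero {ι : Type*} (w : ι → ℕ)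
    (s : Finset ι) (f : (ℕ →₀ ℕ) → ℚ) :
    partFactorial (∑ i ∈ s, single (w i) 1) *
        coeff (∑ i ∈ s, single (w i) 1) (egf f * expTzero) =
      ∑ t ∈ s.powerset, f (∑ i ∈ t, single (w i) 1) := by
  classical
  induction s using Finset.induction_on generalizing f with
  | empty =>
    have hzero : partFactorial 0 = 1 := Finset.prod_empty
    rw [Finset.sum_empty, hzero, one_mul, coeff_zero_eq_constantCoeff_apply, map_mul,
      expTzero_eq_egf_one]
    simp [← coeff_zero_eq_constantCoeff_apply, coeff_egf, hzero]
  | insert a s ha ih =>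
    have hinsert (t : Finset ι) (ht : t ∈ s.powerset) :
        f (∑ i ∈ insert a t, single (w i) 1) = f (∑ i ∈ t, single (w i) 1 + single (w a) 1) := by
      rw [Finset.sum_insert fun hat => ha (Finset.mem_powerset.1 ht hat), add_comm]
    rw [Finset.sum_insert ha, add_comm, partFactorial_mul_coeff_add_single, Derivation.leibniz,
      pderiv_expTzero, pderiv_egf, smul_eq_mul, smul_eq_mul, mul_comm expTzero, map_add, mul_add,
      ih, ih, Finset.sum_powerset_insert ha, Finset.sum_congr rfl hinsert]

/-- Sequences whose exponential generating series is `p · exp(t₁ + t₂ + ⋯) + q` with `p` and `q`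
polynomials. -/
def IsExpPolynomial (f : (ℕ →₀ ℕ) → ℚ) : Prop :=
  ∃ p q : MvPolynomial ℕ ℚ, egf f = p * expTzero + q

lemma exists_egf_eq_coe_of_finite_support {f : (ℕ →₀ ℕ) → ℚ} (hf : f.support.Finite) :
    ∃ p : MvPolynomial ℕ ℚ, egf f = p := by
  classical
  refine ⟨∑ e ∈ hf.toFinset, MvPolynomial.monomial e (f e / partFactorial e), ?_⟩
  ext e
  rw [coeff_egf, MvPolynomial.coeff_coe, MvPolynomial.coeff_sum]
  simp only [MvPolynomial.coeff_monomial, Finset.sum_ite_eq', Set.Finite.mem_toFinset]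
  split_ifs with he
  · rfl
  · rw [Function.notMem_support.1 he, zero_div]

lemma isExpPolynomial_of_egf_eq_mul_expTzero {f g : (ℕ →₀ ℕ) → ℚ} (hg : g.support.Finite)
    (hfg : egf f = egf g * expTzero) : IsExpPolynomial f := by
  obtain ⟨p, hp⟩ := exists_egf_eq_coe_of_finite_support hg
  exact ⟨p, 0, by rw [hfg, hp, MvPolynomial.coe_zero, add_zero]⟩

namespace IsExpPolynomial

variable {f g : (ℕ →₀ ℕ) → ℚ}

lemma sub (hf : IsExpPolynomial f) (hg : IsExpPolynomial g) : IsExpPolynomial (f - g) := by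
  obtain ⟨p, q, hpq⟩ := hf
  obtain ⟨p', q', hpq'⟩ := hg
  have hcoe (a b : MvPolynomial ℕ ℚ) : ((a - b : MvPolynomial ℕ ℚ) : MvPowerSeries ℕ ℚ) = a - b :=
    map_sub MvPolynomial.coeToMvPowerSeries.ringHom a b
  refine ⟨p - p', q - q', ?_⟩
  rw [egf_sub, hpq, hpq', hcoe, hcoe]
  ring

lemma of_finite_support (hf : f.support.Finite) : IsExpPolynomial f := by
  obtain ⟨q, hq⟩ := exists_egf_eq_coe_of_finite_support hf
  exact ⟨0, q, by rw [hq, MvPolynomial.coe_zero, zero_mul, zero_add]⟩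

lemma of_finite_ne (hg : IsExpPolynomial g) (hfg : {e | f e ≠ g e}.Finite) :
    IsExpPolynomial f := by
  have hsupport : (g - f).support.Finite :=
    hfg.subset fun e he hfg' => he (sub_eq_zero.2 hfg'.symm)
  simpa using hg.sub (of_finite_support hsupport)

end IsExpPolynomial

lemma eq_and_eq_of_mul_expTzero_add_eq {p q p' q' : MvPolynomial ℕ ℚ} {j : ℕ}
    (hp : j ∉ p.vars) (hq : j ∉ q.vars) (hp' : j ∉ p'.vars) (hq' : j ∉ q'.vars)
    (h : (p : MvPowerSeries ℕ ℚ) * expTzero + q = p' * expTzero + q') : p = p' ∧ q = q' := by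
  have hderiv {a b : MvPolynomial ℕ ℚ} (ha : j ∉ a.vars) (hb : j ∉ b.vars) :
      pderiv ℚ j (a * expTzero + b : MvPowerSeries ℕ ℚ) = a * expTzero := by
    rw [map_add, Derivation.leibniz, pderiv_expTzero, pderiv_coe, pderiv_coe,
      MvPolynomial.pderiv_eq_zero_of_notMem_vars ha, MvPolynomial.pderiv_eq_zero_of_notMem_vars hb,
      MvPolynomial.coe_zero, smul_zero, add_zero, add_zero, smul_eq_mul]
  have hmul : (p : MvPowerSeries ℕ ℚ) * expTzero = p' * expTzero := by
    rw [← hderiv hp hq, h, hderiv hp' hq']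
  refine ⟨MvPolynomial.coe_injective _ _ (mul_right_cancel₀ expTzero_ne_zero hmul), ?_⟩
  rw [hmul] at h
  exact MvPolynomial.coe_injective _ _ (add_left_cancel h)

end ExponentialSeries

/-! ## Cycle types as exponents -/

section CycleTypes

open Equiv Finset

lemma sameCycle_apply_iff_exists_of_semiconj {α β : Type*} [Finite α] [Finite β] {σ : Perm α}
    {τ : Perm β} {f : β → α} (h : Function.Semiconj f τ σ) {x : β} {y : α} :
    σ.SameCycle (f x) y ↔ ∃ z, τ.SameCycle x z ∧ f z = y := by
  have hpow (k : ℕ) : f ((τ ^ k) x) = (σ ^ k) (f x) := by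
    simpa only [Perm.iterate_eq_pow] using h.iterate_right k x
  refine ⟨fun hy => ?_, ?_⟩
  · obtain ⟨k, -, rfl⟩ := hy.exists_pow_eq'
    exact ⟨(τ ^ k) x, ⟨k, by rw [zpow_natCast]⟩, hpow k⟩
  · rintro ⟨z, hz, rfl⟩
    obtain ⟨k, -, rfl⟩ := hz.exists_pow_eq'
    exact ⟨k, by rw [zpow_natCast, hpow]⟩

lemma filter_subset_biUnion_parts {α : Type*} [DecidableEq α] {s : Finset α} (P : Finpartition s)
    {B : Finset (Finset α)} (hB : B ⊆ P.parts) : {o ∈ P.parts | o ⊆ B.biUnion id} = B := by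
  ext o
  rw [mem_filter]
  refine ⟨fun ⟨ho, hoB⟩ => ?_, fun ho => ⟨hB ho, subset_biUnion_of_mem id ho⟩⟩
  obtain ⟨x, hx⟩ := P.nonempty_of_mem_parts ho
  obtain ⟨o', ho', hx'⟩ := mem_biUnion.1 (hoB hx)
  rwa [P.eq_of_mem_parts ho (hB ho') hx hx']

variable {α β : Type*} [Fintype α] [DecidableEq α] [Fintype β] [DecidableEq β]

/-- The exponent of `t^λ`, where `λ` is the cycle type of `σ` with fixed points counted as parts. -/
noncomputable def cycleExponent (σ : Perm α) : ℕ →₀ ℕ :=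
  partMonomial σ.partition.parts

/-- The exponent of `∏ t_{|o|}`, the product being over a family of nonempty sets `o`. The variable
`t_i` has index `i - 1`. -/
noncomputable def cardExponent (B : Finset (Finset α)) : ℕ →₀ ℕ :=
  ∑ o ∈ B, Finsupp.single (#o - 1) 1

instance (σ : Perm α) : DecidableRel (Perm.SameCycle.setoid σ) :=
  inferInstanceAs (DecidableRel σ.SameCycle)

/-- The partition of a finite set into the orbits of a permutation, including its fixed points. -/
def orbitPartition (σ : Perm α) : Finpartition (univ : Finset α) :=
  .ofSetoid (Perm.SameCycle.setoid σ)

lemma partMonomial_apply (s : Multiset ℕ) (i : ℕ) : partMonomial s i = s.count (i + 1) :=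
  rfl

lemma partMonomial_map_card (P : Finpartition (univ : Finset α)) :
    partMonomial (P.parts.val.map card) = cardExponent P.parts := by
  ext i
  rw [partMonomial_apply, cardExponent, Multiset.count_map, Finsupp.finsetSum_apply]
  simp only [Finsupp.single_apply]
  rw [← card_filter, card_def, filter_val]
  refine congrArg _ (Multiset.filter_congr fun o ho => ?_)
  have hcard : 0 < #o := (P.nonempty_of_mem_parts ho).card_pos
  lia

lemma mem_part_orbitPartition {σ : Perm α} {x y : α} :
    y ∈ (orbitPartition σ).part x ↔ σ.SameCycle x y :=
  Finpartition.mem_part_ofSetoid_iff_rel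

lemma part_orbitPartition_mem (σ : Perm α) (x : α) :
    (orbitPartition σ).part x ∈ (orbitPartition σ).parts :=
  (orbitPartition σ).part_mem.2 (mem_univ x)

lemma mem_part_orbitPartition_self (σ : Perm α) (x : α) : x ∈ (orbitPartition σ).part x :=
  mem_part_orbitPartition.2 (.refl σ x)

lemma mem_parts_orbitPartition {σ : Perm α} {o : Finset α} :
    o ∈ (orbitPartition σ).parts ↔ ∃ x, (orbitPartition σ).part x = o := by
  refine ⟨fun ho => ?_, ?_⟩
  · obtain ⟨x, -, hx⟩ := (orbitPartition σ).part_surjOn ho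
    exact ⟨x, hx⟩
  · rintro ⟨x, rfl⟩
    exact part_orbitPartition_mem σ x

lemma part_orbitPartition_of_mem_support {σ : Perm α} {x : α} (hx : x ∈ σ.support) :
    (orbitPartition σ).part x = (σ.cycleOf x).support := by
  ext y
  rw [mem_part_orbitPartition, Perm.mem_support_cycleOf_iff, and_iff_left hx]

lemma part_orbitPartition_of_notMem_support {σ : Perm α} {x : α} (hx : x ∉ σ.support) :
    (orbitPartition σ).part x = {x} := by
  ext y
  rw [mem_part_orbitPartition, mem_singleton]
  exact ⟨fun h => (h.eq_of_left (Perm.notMem_support.1 hx)).symm, fun h => h ▸ .refl σ x⟩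

lemma support_injOn_cycleFactorsFinset (σ : Perm α) :
    Set.InjOn Perm.support (σ.cycleFactorsFinset : Set (Perm α)) := fun c hc d hd hcd => by
  obtain ⟨a, ha⟩ := (Perm.mem_cycleFactorsFinset_iff.1 hc).1.nonempty_support
  rw [Perm.cycle_is_cycleOf ha hc, Perm.cycle_is_cycleOf (hcd ▸ ha) hd]

lemma image_part_orbitPartition_support (σ : Perm α) :
    σ.support.image (orbitPartition σ).part = σ.cycleFactorsFinset.image Perm.support := by
  have hcycleOf : σ.cycleFactorsFinset = σ.support.image σ.cycleOf := by
    ext c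
    rw [mem_image]
    refine ⟨fun hc => ?_, ?_⟩
    · obtain ⟨a, ha⟩ := (Perm.mem_cycleFactorsFinset_iff.1 hc).1.nonempty_support
      exact ⟨a, Perm.mem_cycleFactorsFinset_support_le hc ha, (Perm.cycle_is_cycleOf ha hc).symm⟩
    · rintro ⟨a, ha, rfl⟩
      exact Perm.cycleOf_mem_cycleFactorsFinset_iff.2 ha
  rw [hcycleOf, image_image]
  exact image_congr fun x hx => part_orbitPartition_of_mem_support hx

lemma disjoint_image_part_support_compl (σ : Perm α) :
    Disjoint (σ.support.image (orbitPartition σ).part)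
      (σ.supportᶜ.image (orbitPartition σ).part) := by
  simp only [disjoint_left, mem_image, not_exists, not_and]
  rintro _ ⟨x, hx, rfl⟩ y hy hyx
  have hxy := mem_part_orbitPartition_self σ x
  rw [← hyx, part_orbitPartition_of_notMem_support (mem_compl.1 hy), mem_singleton] at hxy
  exact mem_compl.1 hy (hxy ▸ hx)

lemma parts_partition_eq_map_card (σ : Perm α) :
    σ.partition.parts = (orbitPartition σ).parts.val.map card := by
  have hparts : (orbitPartition σ).parts = (σ.support.image (orbitPartition σ).part).disjUnion
      (σ.supportᶜ.image (orbitPartition σ).part) (disjoint_image_part_support_compl σ) := by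
    ext o
    rw [mem_parts_orbitPartition, disjUnion_eq_union, ← image_union, union_compl]
    simp only [mem_image, mem_univ, true_and]
  have hfixed : σ.supportᶜ.image (orbitPartition σ).part = σ.supportᶜ.image singleton :=
    image_congr fun x hx => part_orbitPartition_of_notMem_support (mem_compl.1 hx)
  rw [hparts, disjUnion_val, Multiset.map_add, Perm.parts_partition, Perm.cycleType_def,
    image_part_orbitPartition_support, hfixed,
    image_val_of_injOn (support_injOn_cycleFactorsFinset σ),
    image_val_of_injOn singleton_injective.injOn, Multiset.map_map, Multiset.map_map]
  simp [card_compl]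

lemma cycleExponent_eq_cardExponent (σ : Perm α) :
    cycleExponent σ = cardExponent (orbitPartition σ).parts := by
  rw [cycleExponent, parts_partition_eq_map_card, partMonomial_map_card]

lemma part_orbitPartition_subset {σ : Perm α} {A : Finset α} (hA : ∀ x, σ x ∈ A ↔ x ∈ A) {x : α}
    (hx : x ∈ A) : (orbitPartition σ).part x ⊆ A := fun y hy => by
  obtain ⟨k, -, rfl⟩ := (mem_part_orbitPartition.1 hy).exists_pow_eq'
  rw [← Perm.iterate_eq_pow]
  exact Function.Iterate.rec (· ∈ A) hx (fun a ha => (hA a).2 ha) k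

lemma biUnion_filter_subset_orbitPartition {σ : Perm α} {A : Finset α}
    (hA : ∀ x, σ x ∈ A ↔ x ∈ A) :
    ({o ∈ (orbitPartition σ).parts | o ⊆ A} : Finset (Finset α)).biUnion id = A := by
  ext x
  simp only [mem_biUnion, mem_filter, id]
  refine ⟨fun ⟨o, ho, hx⟩ => ho.2 hx, fun hx => ?_⟩
  exact ⟨_, ⟨part_orbitPartition_mem σ x, part_orbitPartition_subset hA hx⟩,
    mem_part_orbitPartition_self σ x⟩

lemma apply_mem_biUnion_iff {σ : Perm α} {B : Finset (Finset α)}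
    (hB : B ⊆ (orbitPartition σ).parts) (x : α) : σ x ∈ B.biUnion id ↔ x ∈ B.biUnion id := by
  simp only [mem_biUnion, id]
  refine exists_congr fun o => and_congr_right fun ho => ?_
  obtain ⟨y, rfl⟩ := mem_parts_orbitPartition.1 (hB ho)
  rw [mem_part_orbitPartition, mem_part_orbitPartition, Perm.sameCycle_apply_right]

lemma sum_stable_eq_sum_powerset_orbits {R : Type*} [AddCommMonoid R] (σ : Perm α)
    (f : Finset (Finset α) → R) :
    ∑ A : Finset α with ∀ x, σ x ∈ A ↔ x ∈ A, f {o ∈ (orbitPartition σ).parts | o ⊆ A} =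
      ∑ B ∈ (orbitPartition σ).parts.powerset, f B :=
  sum_nbij' (fun A => {o ∈ (orbitPartition σ).parts | o ⊆ A}) (fun B => B.biUnion id)
    (fun _ _ => mem_powerset.2 (filter_subset _ _))
    (fun _ hB => mem_filter.2 ⟨mem_univ _, apply_mem_biUnion_iff (mem_powerset.1 hB)⟩)
    (fun _ hA => biUnion_filter_subset_orbitPartition (mem_filter.1 hA).2)
    (fun _ hB => filter_subset_biUnion_parts _ (mem_powerset.1 hB))
    (fun _ _ => rfl)

lemma cycleExponent_eq_of_semiconj {σ : Perm α} {τ : Perm β} (f : β ↪ α)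
    (h : Function.Semiconj f τ σ) :
    cycleExponent τ = cardExponent {o ∈ (orbitPartition σ).parts | o ⊆ univ.map f} := by
  have hpart (b : β) : (orbitPartition σ).part (f b) = ((orbitPartition τ).part b).map f := by
    ext y
    simp only [mem_map, mem_part_orbitPartition, sameCycle_apply_iff_exists_of_semiconj h]
  have hparts : ({o ∈ (orbitPartition σ).parts | o ⊆ univ.map f} : Finset (Finset α)) =
      (orbitPartition τ).parts.map (mapEmbedding f).toEmbedding := by
    ext o
    rw [mem_filter, mem_map]
    refine ⟨fun ⟨ho, hof⟩ => ?_, ?_⟩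
    · obtain ⟨x, rfl⟩ := mem_parts_orbitPartition.1 ho
      obtain ⟨b, -, rfl⟩ := mem_map.1 (hof (mem_part_orbitPartition_self σ x))
      exact ⟨_, part_orbitPartition_mem τ b, (hpart b).symm⟩
    · rintro ⟨_, ho, rfl⟩
      obtain ⟨b, rfl⟩ := mem_parts_orbitPartition.1 ho
      have hmem := part_orbitPartition_mem σ (f b)
      rw [hpart b] at hmem
      exact ⟨hmem, map_subset_map.2 (subset_univ _)⟩
  rw [cycleExponent_eq_cardExponent, hparts, cardExponent, cardExponent, sum_map]
  simp

lemma cycleExponent_subtypePerm (σ : Perm α) {A : Finset α} (hA : ∀ x, σ x ∈ A ↔ x ∈ A) :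
    cycleExponent (σ.subtypePerm hA) = cardExponent {o ∈ (orbitPartition σ).parts | o ⊆ A} := by
  have hA' : univ.map (.subtype (· ∈ A)) = A := by ext x; simp
  rw [cycleExponent_eq_of_semiconj (σ := σ) (.subtype (· ∈ A)) fun _ => rfl, hA']

lemma cycleExponent_permCongr (e : α ≃ β) (σ : Perm α) :
    cycleExponent (e.permCongr σ) = cycleExponent σ := by
  have hsemiconj : Function.Semiconj e.toEmbedding σ (e.permCongr σ) := fun x => by simp
  rw [cycleExponent_eq_of_semiconj _ hsemiconj, cycleExponent_eq_cardExponent, map_univ_equiv,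
    filter_true_of_mem fun o _ => subset_univ o]

lemma parts_eq_of_cycleExponent_eq {σ : Perm α} {τ : Perm β}
    (h : cycleExponent σ = cycleExponent τ) : σ.partition.parts = τ.partition.parts := by
  ext n
  cases n with
  | zero =>
    have hzero {m : ℕ} (P : m.Partition) : 0 ∉ P.parts := fun h0 => (P.parts_pos h0).false
    rw [Multiset.count_eq_zero_of_notMem (hzero _), Multiset.count_eq_zero_of_notMem (hzero _)]
  | succ i => exact DFunLike.congr_fun h i

lemma exists_permCongr_eq_of_cycleExponent_eq {σ : Perm α} {τ : Perm β}
    (h : cycleExponent σ = cycleExponent τ) : ∃ e : α ≃ β, e.permCongr σ = τ := by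
  have hcard : Fintype.card α = Fintype.card β := by
    rw [← σ.partition.parts_sum, ← τ.partition.parts_sum, parts_eq_of_cycleExponent_eq h]
  let e : α ≃ β := Fintype.equivOfCardEq hcard
  have hconj : IsConj (e.permCongr σ) τ := by
    rw [Perm.partition_eq_of_isConj]
    exact Nat.Partition.ext
      (parts_eq_of_cycleExponent_eq ((cycleExponent_permCongr e σ).trans h))
  obtain ⟨c, hc⟩ := isConj_iff.1 hconj
  exact ⟨e.trans c, by rw [← hc]; rfl⟩

lemma exists_parts_partition_eq {s : Multiset ℕ} (hs : 0 ∉ s) :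
    ∃ σ : Perm (Fin s.sum), σ.partition.parts = s := by
  have hsplit : s.filter (2 ≤ ·) + Multiset.replicate (s.count 1) 1 = s := by
    rw [← Multiset.filter_eq']
    conv_rhs => rw [← Multiset.filter_add_not (2 ≤ ·) s]
    refine congrArg _ (Multiset.filter_congr fun n hn => ?_)
    have hn0 : n ≠ 0 := fun h0 => hs (h0 ▸ hn)
    lia
  have hsum : (s.filter (2 ≤ ·)).sum + s.count 1 = s.sum := by
    simpa only [Multiset.sum_add, Multiset.sum_replicate, smul_eq_mul, mul_one] using
      congrArg Multiset.sum hsplit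
  obtain ⟨σ, hσ⟩ := (Perm.exists_with_cycleType_iff (Fin s.sum)).2
    ⟨by rw [Fintype.card_fin, ← hsum]; exact Nat.le_add_right _ _,
      fun a ha => (Multiset.mem_filter.1 ha).2⟩
  refine ⟨σ, ?_⟩
  rw [Perm.parts_partition, ← Perm.sum_cycleType, hσ, Fintype.card_fin,
    Nat.sub_eq_of_eq_add' hsum.symm, hsplit]

lemma exists_cycleExponent_eq (e : ℕ →₀ ℕ) :
    ∃ (n : ℕ) (σ : Perm (Fin n)), cycleExponent σ = e := by
  obtain ⟨σ, hσ⟩ := exists_parts_partition_eq (s := (Finsupp.toMultiset e).map Nat.succ) (by simp)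
  refine ⟨_, σ, Finsupp.ext fun i => ?_⟩
  rw [cycleExponent, hσ, partMonomial_apply, ← Nat.succ_eq_add_one,
    Multiset.count_map_eq_count' _ _ Nat.succ_injective, Finsupp.count_toMultiset]

lemma finite_ne_of_forall_cycleExponent_eq {R : Type*} {f g : (ℕ →₀ ℕ) → R} (r : ℕ)
    (h : ∀ n, r ≤ n → ∀ σ : Perm (Fin n), f (cycleExponent σ) = g (cycleExponent σ)) :
    {e | f e ≠ g e}.Finite := by
  refine ((Set.finite_lt_nat r).biUnion fun n _ => Set.finite_range fun σ : Perm (Fin n) =>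
    cycleExponent σ).subset fun e he => ?_
  obtain ⟨n, σ, rfl⟩ := exists_cycleExponent_eq e
  have hn : n < r := not_le.1 fun hn => he (h n hn σ)
  exact Set.mem_biUnion hn ⟨σ, rfl⟩

end CycleTypes

/-! ## The exponential generating series of a character -/

namespace FIMod

open Equiv

variable {M : FIMod} {α β : Type} [Fintype α] [Fintype β]

lemma act_pow (σ : Perm α) (k : ℕ) : M.act σ.toEmbedding ^ k = M.act (σ ^ k).toEmbedding := by
  induction k with
  | zero => exact LinearMap.ext fun x => (act_refl x).symm
  | succ k ih =>
    refine LinearMap.ext fun x => ?_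
    rw [pow_succ, ih, Module.End.mul_apply, act_act]
    rfl

lemma character_eq_zero_of_subsingleton [Subsingleton (M.space α)] (σ : Perm α) :
    M.character σ = 0 := by
  rw [character, Subsingleton.elim (M.act σ.toEmbedding) 0, map_zero]

lemma character_eq_of_cycleExponent_eq (M : FIMod) [DecidableEq α] [DecidableEq β]
    {σ : Perm α} {τ : Perm β} (h : cycleExponent σ = cycleExponent τ) :
    M.character σ = M.character τ := by
  obtain ⟨e, rfl⟩ := exists_permCongr_eq_of_cycleExponent_eq h
  exact (M.character_permCongr e σ).symm

lemma character_mem_range_algebraMap [PointwiseFinite M] (σ : Perm α) :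
    M.character σ ∈ Set.range (algebraMap ℚ ℂ) := by
  classical
  have : NeZero (orderOf σ) := ⟨(orderOf_pos σ).ne'⟩
  refine trace_mem_range_algebraMap_of_forall_coprime ℚ (N := orderOf σ) ?_ fun k hk => ?_
  · rw [act_pow, pow_orderOf_eq_one]
    exact LinearMap.ext act_refl
  · have hpartition : (σ ^ k).partition = σ.partition :=
      Perm.partition_eq_of_isConj.1 (Perm.isConj_of_cycleType_eq (cycleType_pow_of_coprime hk))
    rw [act_pow]
    exact M.character_eq_of_cycleExponent_eq (by rw [cycleExponent, hpartition, cycleExponent])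

variable [DecidableEq α] [PointwiseFinite M]

lemma exists_character_eq_algebraMap (M : FIMod) [PointwiseFinite M] :
    ∃ f : (ℕ →₀ ℕ) → ℚ, ∀ (α : Type) [Fintype α] [DecidableEq α] (σ : Perm α),
      M.character σ = algebraMap ℚ ℂ (f (cycleExponent σ)) := by
  choose n τ hτ using exists_cycleExponent_eq
  choose f hf using fun e => M.character_mem_range_algebraMap (τ e)
  refine ⟨f, fun α _ _ σ => ?_⟩
  rw [hf, M.character_eq_of_cycleExponent_eq (hτ (cycleExponent σ))]

/-- The character of `M`, as the rational-valued function of the exponent of `t^λ` whose value is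
the trace of a permutation of cycle type `λ`. -/
noncomputable def ratCharacter (M : FIMod) [PointwiseFinite M] : (ℕ →₀ ℕ) → ℚ :=
  M.exists_character_eq_algebraMap.choose

lemma character_eq_algebraMap (M : FIMod) [PointwiseFinite M] (σ : Perm α) :
    M.character σ = algebraMap ℚ ℂ (M.ratCharacter (cycleExponent σ)) :=
  M.exists_character_eq_algebraMap.choose_spec α σ

lemma ratCharacter_eq_zero_of_subsingleton [Subsingleton (M.space α)] (σ : Perm α) :
    M.ratCharacter (cycleExponent σ) = 0 :=
  (algebraMap ℚ ℂ).injective (by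
    rw [← character_eq_algebraMap, character_eq_zero_of_subsingleton, map_zero])

lemma ratCharacter_shift (h : Function.Injective (M.act (.some : α ↪ Option α))) (σ : Perm α) :
    M.shift.ratCharacter (cycleExponent σ) =
      M.ratCharacter (cycleExponent σ) + M.derivative.ratCharacter (cycleExponent σ) :=
  (algebraMap ℚ ℂ).injective (by
    simpa only [character_eq_algebraMap, map_add] using character_shift h σ)

namespace HasInjectiveDerivatives

variable {k r : ℕ}

lemma ratCharacter_eq_sum (h : HasInjectiveDerivatives k 0 M) (σ : Perm α) :
    M.ratCharacter (cycleExponent σ) =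
      ∑ B ∈ (orbitPartition σ).parts.powerset, M.indecomposables.ratCharacter (cardExponent B) := by
  refine (algebraMap ℚ ℂ).injective ?_
  rw [← character_eq_algebraMap, h.character_eq_sum, ← sum_stable_eq_sum_powerset_orbits,
    Finset.sum_filter, map_sum]
  refine Finset.sum_congr rfl fun A _ => ?_
  split_ifs with hA
  · rw [character_eq_algebraMap, cycleExponent_subtypePerm]
  · rw [map_zero]

lemma egf_ratCharacter (h : HasInjectiveDerivatives k 0 M) :
    egf M.ratCharacter = egf M.indecomposables.ratCharacter * expTzero := by
  refine egf_eq_iff.2 fun e => ?_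
  obtain ⟨n, σ, rfl⟩ := exists_cycleExponent_eq e
  rw [h.ratCharacter_eq_sum, cycleExponent_eq_cardExponent]
  exact (partFactorial_mul_coeff_egf_mul_expTzero _ _ _).symm

lemma finite_support_ratCharacter_indecomposables (h : HasInjectiveDerivatives k 0 M) :
    M.indecomposables.ratCharacter.support.Finite :=
  finite_ne_of_forall_cycleExponent_eq (g := 0) k fun n hn σ => by
    have : Subsingleton (M.indecomposables.space (Fin n)) :=
      Module.finrank_zero_iff.1 (h.finrank_indecomposables_eq_zero (by simpa using hn))
    exact ratCharacter_eq_zero_of_subsingleton σ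

lemma isExpPolynomial_ratCharacter_of_zero (h : HasInjectiveDerivatives k 0 M) :
    IsExpPolynomial M.ratCharacter :=
  isExpPolynomial_of_egf_eq_mul_expTzero h.finite_support_ratCharacter_indecomposables
    h.egf_ratCharacter

lemma finite_ratCharacter_ne (h : HasInjectiveDerivatives k r M) :
    {e | M.ratCharacter e ≠ (M.shift.ratCharacter - M.derivative.ratCharacter) e}.Finite :=
  finite_ne_of_forall_cycleExponent_eq r fun n hn σ => by
    rw [Pi.sub_apply, ratCharacter_shift (h.injectiveFrom (Fin n) (by simpa using hn)),
      add_sub_cancel_right]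

lemma isExpPolynomial_ratCharacter (h : HasInjectiveDerivatives k r M) :
    IsExpPolynomial M.ratCharacter := by
  induction k generalizing M r with
  | zero =>
    refine .of_finite_support (finite_ne_of_forall_cycleExponent_eq (g := 0) r fun n hn σ => ?_)
    have := h (Fin n) (by simpa using hn)
    exact ratCharacter_eq_zero_of_subsingleton σ
  | succ k ih_derivative =>
    induction r generalizing M with
    | zero => exact h.isExpPolynomial_ratCharacter_of_zero
    | succ r ih_shift =>
      exact ((ih_shift h.shift).sub (ih_derivative h.2)).of_finite_ne h.finite_ratCharacter_ne

end HasInjectiveDerivatives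

end FIMod

/-! ## Finitely generated FI-modules -/

namespace FIMod

instance (S T : FIObj) : Finite (S ⟶ T) :=
  inferInstanceAs (Finite {f : S.α → T.α // Function.Injective f})

/-- The sub-FI-module generated by a family of elements. -/
def subSpan (M : FIMod) {ι : Type*} (S : ι → FIObj) (m : ∀ i, M.obj (S i)) : FISub M where
  carrier T := Submodule.span ℂ (Set.range fun z : Σ i, S i ⟶ T => M.map z.2 (m z.1))
  map_mem {T U} f x hx := by
    induction hx using Submodule.span_induction with
    | mem x hx =>
      obtain ⟨⟨i, g⟩, rfl⟩ := hx
      exact Submodule.subset_span ⟨⟨i, g ≫ f⟩, by simp⟩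
    | zero => simp
    | add x y _ _ hx hy => simpa using add_mem hx hy
    | smul c x _ hx => simpa using Submodule.smul_mem _ c hx

variable {M : FIMod}

lemma FG.exists_span_eq_top (hM : M.FG) :
    ∃ (k : ℕ) (S : Fin k → FIObj) (m : ∀ i, M.obj (S i)),
      ∀ T, Submodule.span ℂ (Set.range fun z : Σ i, S i ⟶ T => M.map z.2 (m z.1)) = ⊤ := by
  obtain ⟨k, S, m, h⟩ := hM
  exact ⟨k, S, m, h (M.subSpan S m) fun i => Submodule.subset_span ⟨⟨i, 𝟙 _⟩, by simp⟩⟩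

lemma FG.pointwiseFinite (hM : M.FG) : PointwiseFinite M where
  finiteDimensional T := by
    obtain ⟨k, S, m, h⟩ := hM.exists_span_eq_top
    rw [FiniteDimensional, Module.finite_def, ← h T]
    exact Submodule.fg_span (Set.finite_range _)

lemma FG.exists_generatedBelow (hM : M.FG) : ∃ d, GeneratedBelow d M := by
  obtain ⟨k, S, m, h⟩ := hM.exists_span_eq_top
  refine ⟨Finset.univ.sup (fun i => Fintype.card (S i).α) + 1, fun α _ => ?_⟩
  rw [eq_top_iff, ← h (FIObj.of α), Submodule.span_le]
  rintro _ ⟨⟨i, f⟩, rfl⟩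
  have hcard := Finset.le_sup (f := fun i => Fintype.card (S i).α) (Finset.mem_univ i)
  exact act_mem_spanBelow (β := (S i).α) ⟨f.1, f.2⟩ (Nat.lt_succ_of_le hcard) (m i)

lemma FG.isExpPolynomial_ratCharacter [PointwiseFinite M] (hM : M.FG) :
    IsExpPolynomial M.ratCharacter := by
  obtain ⟨d, hd⟩ := hM.exists_generatedBelow
  obtain ⟨r, hr⟩ := hd.hasInjectiveDerivatives
  exact hr.isExpPolynomial_ratCharacter

end FIMod

lemma isEnhancedHilbertPair_iff {M : FIMod} [M.PointwiseFinite] {n₀ : ℕ}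
    {p q : MvPolynomial (Fin n₀) ℚ} :
    IsEnhancedHilbertPair M n₀ p q ↔
      egf M.ratCharacter = (MvPolynomial.rename Fin.val p : MvPowerSeries ℕ ℚ) * expTzero +
        (MvPolynomial.rename Fin.val q : MvPowerSeries ℕ ℚ) := by
  have htrace (n : ℕ) (σ : Equiv.Perm (Fin n)) :
      traceOfPerm M n σ = algebraMap ℚ ℂ (M.ratCharacter (cycleExponent σ)) :=
    M.character_eq_algebraMap σ
  simp only [IsEnhancedHilbertPair, htrace, (algebraMap ℚ ℂ).injective.eq_iff, egf_eq_iff]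
  refine ⟨fun h e => ?_, fun h n σ => h (cycleExponent σ)⟩
  obtain ⟨n, σ, rfl⟩ := exists_cycleExponent_eq e
  exact h n σ

lemma notMem_vars_rename_finVal {n : ℕ} (p : MvPolynomial (Fin n) ℚ) :
    n ∉ (MvPolynomial.rename Fin.val p).vars := fun h => by
  obtain ⟨i, -, hi⟩ := MvPolynomial.mem_vars_rename Fin.val p h
  exact i.2.ne hi

lemma exists_rename_finVal_eq (P Q : MvPolynomial ℕ ℚ) :
    ∃ (n : ℕ) (p q : MvPolynomial (Fin n) ℚ),
      MvPolynomial.rename Fin.val p = P ∧ MvPolynomial.rename Fin.val q = Q := by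
  obtain ⟨n, hn⟩ := (P.vars ∪ Q.vars).exists_nat_subset_range
  have hrange {R : MvPolynomial ℕ ℚ} (hR : R.vars ⊆ P.vars ∪ Q.vars) :
      ∃ r : MvPolynomial (Fin n) ℚ, MvPolynomial.rename Fin.val r = R :=
    MvPolynomial.exists_rename_eq_of_vars_subset_range R _ Fin.val_injective fun i hi =>
      ⟨⟨i, Finset.mem_range.1 (hn (hR hi))⟩, rfl⟩
  obtain ⟨p, hp⟩ := hrange Finset.subset_union_left
  obtain ⟨q, hq⟩ := hrange Finset.subset_union_right
  exact ⟨n, p, q, hp, hq⟩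

/-- The enhanced Hilbert series of a finitely generated FI-module is
rational: `H̃_M = p·exp(T₀) + q` for unique polynomials p, q in finitely many of the
variables. -/
theorem fg_FIMod_enhanced_hilbert_series (M : FIMod) (hM : FIMod.FG M) :
    ∃ (n₀ : ℕ) (p q : MvPolynomial (Fin n₀) ℚ),
      IsEnhancedHilbertPair M n₀ p q ∧
        ∀ p' q' : MvPolynomial (Fin n₀) ℚ,
          IsEnhancedHilbertPair M n₀ p' q' → p' = p ∧ q' = q := by
  have := hM.pointwiseFinite
  obtain ⟨P, Q, hPQ⟩ := hM.isExpPolynomial_ratCharacter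
  obtain ⟨n₀, p, q, rfl, rfl⟩ := exists_rename_finVal_eq P Q
  refine ⟨n₀, p, q, isEnhancedHilbertPair_iff.2 hPQ, fun p' q' h => ?_⟩
  have heq := (isEnhancedHilbertPair_iff.1 h).symm.trans hPQ
  obtain ⟨hp, hq⟩ := eq_and_eq_of_mul_expTzero_add_eq (notMem_vars_rename_finVal p')
    (notMem_vars_rename_finVal q') (notMem_vars_rename_finVal p) (notMem_vars_rename_finVal q) heq
  exact ⟨MvPolynomial.rename_injective _ Fin.val_injective hp,
    MvPolynomial.rename_injective _ Fin.val_injective hq⟩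
end
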